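/- arXiv:1909.11570 — 11 statements merged into one kernel-verified Lean document; each statement's English description precedes it below -/
import Mathlib

section
/- If A is a compact operator, then liminf_{i → ∞} ‖y^i − P_{Y_{i-1}} y^i‖ = 0, where P_{Y_{i-1}} denotes the orthogonal projection onto Y_{i-1} (with Y_0 = {0}). -/
/-!
Cover a totally bounded sequence by finitely many sets of diameter less than `ε`. Whenever two terms
lie in the same set, the later one is `ε`-close to the earlier one, so all but finitely many terms
are `ε`-close to a predecessor and hence to the span of their predecessors. Thus the residuals not
only have limit inferior zero but converge to zero.
-/

open Bornology Filter Set Topology Uniformity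

theorem finite_setOf_forall_lt_notMem_of_totallyBounded {ι X : Type*} [LinearOrder ι]
    [UniformSpace X] {x : ι → X} (hx : TotallyBounded (range x)) {V : Set (X × X)} (hV : V ∈ 𝓤 X) :
    {i | ∀ j < i, (x i, x j) ∉ V}.Finite := by
  obtain ⟨W, hW, hW_symm, hWV⟩ := comp_symm_mem_uniformity_sets hV
  obtain ⟨t, ht, hcover⟩ := hx W hW
  have exists_center (i : ι) : ∃ c ∈ t, (x i, c) ∈ W := by
    simpa using hcover (mem_range_self i)
  choose center hcenter hclose using exists_center
  refine not_infinite.mp fun hinf ↦ ?_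
  obtain ⟨j, -, i, hi, hji, hcenter_eq⟩ :=
    hinf.exists_lt_map_eq_of_mapsTo (fun i _ ↦ hcenter i) ht
  have hj : (center i, x j) ∈ W := hcenter_eq ▸ hW_symm.symm _ _ (hclose j)
  exact hi j hji (hWV ⟨center i, hclose i, hj⟩)

theorem tendsto_infDist_cofinite_of_forall_lt_mem {ι X : Type*} [LinearOrder ι]
    [PseudoMetricSpace X] {x : ι → X} {s : ι → Set X} (hx : TotallyBounded (range x))
    (hs : ∀ i, ∀ j < i, x j ∈ s i) :
    Tendsto (fun i ↦ Metric.infDist (x i) (s i)) cofinite (𝓝 0) := by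
  refine tendsto_order.mpr ⟨fun a ha ↦ .of_forall fun i ↦ ha.trans_le Metric.infDist_nonneg,
    fun ε hε ↦ ?_⟩
  have hfin := finite_setOf_forall_lt_notMem_of_totallyBounded hx (Metric.dist_mem_uniformity hε)
  filter_upwards [hfin.compl_mem_cofinite] with i hi
  obtain ⟨j, hji, hdist⟩ : ∃ j < i, dist (x i) (x j) < ε := by simpa using hi
  exact (Metric.infDist_le_dist_of_mem (hs i j hji)).trans_lt hdist

theorem norm_sub_eq_infDist_of_sub_mem_orthogonal {𝕜 E : Type*} [RCLike 𝕜]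
    [NormedAddCommGroup E] [InnerProductSpace 𝕜 E] {K : Submodule 𝕜 E} {x p : E} (hp : p ∈ K)
    (hxp : x - p ∈ Kᗮ) : ‖x - p‖ = Metric.infDist x K := by
  simp only [Metric.infDist_eq_iInf, dist_eq_norm]
  exact (K.norm_eq_iInf_iff_inner_eq_zero hp).mpr ((K.mem_orthogonal' _).mp hxp)

theorem totallyBounded_range_comp_of_isCompactOperator {ι 𝕜₁ 𝕜₂ M₁ M₂ : Type*}
    [NontriviallyNormedField 𝕜₁] [SeminormedRing 𝕜₂] {σ : 𝕜₁ →+* 𝕜₂} [TopologicalSpace M₁]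
    [AddCommMonoid M₁] [Module 𝕜₁ M₁] [UniformSpace M₂] [AddCommMonoid M₂] [Module 𝕜₂ M₂]
    [ContinuousConstSMul 𝕜₂ M₂] {f : M₁ →ₛₗ[σ] M₂} (hf : IsCompactOperator f) {u : ι → M₁}
    (hu : IsVonNBounded 𝕜₁ (range u)) : TotallyBounded (range (f ∘ u)) := by
  obtain ⟨K, hK, hsub⟩ := hf.image_subset_compact_of_isVonNBounded hu
  exact hK.totallyBounded.subset (range_comp f u ▸ hsub)

theorem liminf_gram_schmidt_residual_eq_zero_of_compact_general {ι 𝕜 E : Type*} [LinearOrder ι]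
    [RCLike 𝕜] [NormedAddCommGroup E] [InnerProductSpace 𝕜 E] {y p : ι → E}
    (hy : TotallyBounded (range y)) (hp : ∀ i, p i ∈ Submodule.span 𝕜 (y '' Iio i))
    (hyp : ∀ i, y i - p i ∈ (Submodule.span 𝕜 (y '' Iio i))ᗮ) :
    Tendsto (fun i ↦ ‖y i - p i‖) cofinite (𝓝 0) := by
  simp only [norm_sub_eq_infDist_of_sub_mem_orthogonal (hp _) (hyp _)]
  exact tendsto_infDist_cofinite_of_forall_lt_mem hy fun _ _ hji ↦
    Submodule.subset_span (mem_image_of_mem y hji)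

/-- Let `U`, `Y` be real Hilbert spaces, `A : U → Y` a bounded linear operator, and
`(uᵢ)` a sequence of unit vectors in `U`; set `yᵢ = A uᵢ` and let
`Yₙ = span {y⁰, …, yⁿ⁻¹}` (so `Y₀ = {0}`), with orthogonal projections `Q n` onto `Yₙ`.
If `A` is a compact operator, then `liminf_{i → ∞} ‖yᵢ − Q i yᵢ‖ = 0`. -/
theorem liminf_gram_schmidt_residual_eq_zero_of_compact
    {U Y : Type*} [NormedAddCommGroup U] [InnerProductSpace ℝ U] [CompleteSpace U]
    [NormedAddCommGroup Y] [InnerProductSpace ℝ Y] [CompleteSpace Y]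
    (A : U →L[ℝ] Y) (hA : IsCompactOperator (A : U → Y))
    (u : ℕ → U) (hu : ∀ i, ‖u i‖ = 1)
    (Q : ℕ → Y →L[ℝ] Y)
    (hQ : ∀ n, ∀ z : Y,
      Q n z ∈ Submodule.span ℝ ((fun i => A (u i)) '' Set.Iio n) ∧
      z - Q n z ∈ (Submodule.span ℝ ((fun i => A (u i)) '' Set.Iio n))ᗮ) :
    Filter.liminf (fun i : ℕ => ‖A (u i) - Q i (A (u i))‖) Filter.atTop = 0 := by
  have hbdd : IsVonNBounded ℝ (range u) :=
    (NormedSpace.isVonNBounded_iff' ℝ).mpr ⟨1, forall_mem_range.mpr fun i ↦ (hu i).le⟩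
  have hy := totallyBounded_range_comp_of_isCompactOperator (f := A.toLinearMap) hA hbdd
  have hlim := liminf_gram_schmidt_residual_eq_zero_of_compact_general hy
    (fun i ↦ (hQ i _).1) (fun i ↦ (hQ i _).2)
  exact (Nat.cofinite_eq_atTop ▸ hlim).liminf_eq
end

section
/- For every n ≥ 2, if w ∈ U satisfies A w = y^n − P_{Y_{n-1}} y^n, then ‖w‖ ≥ ‖u^n − P_{U_{n-1}} u^n‖, where P_{U_{n-1}} and P_{Y_{n-1}} are the orthogonal projections onto U_{n-1} and Y_{n-1} respectively. -/
/-!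
Since `A` carries `U_{n-1}` onto `Y_{n-1}`, injectivity turns `A w = yⁿ − Q yⁿ` into
`uⁿ − w ∈ U_{n-1}`. Thus `‖w‖` is the distance from `uⁿ` to a point of `U_{n-1}`, and the
orthogonal projection `P uⁿ` is a nearest such point.
-/

section

variable {𝕜 U Y : Type*} [RCLike 𝕜] [NormedAddCommGroup U] [InnerProductSpace 𝕜 U]

theorem norm_sub_le_norm_sub_of_sub_mem_orthogonal {V : Submodule 𝕜 U} {x p v : U}
    (hp : p ∈ V) (hxp : x - p ∈ Vᗮ) (hv : v ∈ V) : ‖x - p‖ ≤ ‖x - v‖ := by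
  have hmin : ‖x - p‖ = ⨅ z : V, ‖x - z‖ :=
    (V.norm_eq_iInf_iff_inner_eq_zero hp).mpr ((V.mem_orthogonal' _).mp hxp)
  have hbdd : BddBelow (Set.range fun z : V ↦ ‖x - z‖) :=
    ⟨0, Set.forall_mem_range.mpr fun _ ↦ norm_nonneg _⟩
  exact hmin.trans_le (ciInf_le hbdd ⟨v, hv⟩)

theorem norm_transformed_input_lower_bound_general [AddCommGroup Y] [Module 𝕜 Y]
    {A : U →ₗ[𝕜] Y} {V : Submodule 𝕜 U} (hA : A.ker ≤ V) {x p w : U} {q : Y}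
    (hp : p ∈ V) (hxp : x - p ∈ Vᗮ) (hq : q ∈ V.map A) (hw : A w = A x - q) :
    ‖x - p‖ ≤ ‖w‖ := by
  have hAxw : A (x - w) = q := by rw [map_sub, hw, sub_sub_cancel]
  have hxw : x - w ∈ V := by
    rwa [← Submodule.comap_map_eq_self hA, Submodule.mem_comap, hAxw]
  simpa only [sub_sub_cancel] using norm_sub_le_norm_sub_of_sub_mem_orthogonal hp hxp hxw

end

/-- Let `U`, `Y` be real Hilbert spaces, `A : U → Y` an injective bounded linear operator,
`(uⁱ)_{i ≥ 1}` a sequence in `U` with `yⁱ = A uⁱ`, and let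
`U_{n-1} = span {u¹, …, u^{n-1}}`, `Y_{n-1} = span {y¹, …, y^{n-1}}` with orthogonal
projections `P` and `Q`.  For every `n ≥ 2`, if `w ∈ U` satisfies
`A w = yⁿ − Q yⁿ`, then `‖w‖ ≥ ‖uⁿ − P uⁿ‖`. -/
theorem norm_transformed_input_lower_bound
    {U Y : Type*} [NormedAddCommGroup U] [InnerProductSpace ℝ U] [CompleteSpace U]
    [NormedAddCommGroup Y] [InnerProductSpace ℝ Y] [CompleteSpace Y]
    (A : U →L[ℝ] Y) (hA : Function.Injective A)
    (u : ℕ → U) (n : ℕ) (hn : 2 ≤ n)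
    (P : U →L[ℝ] U)
    (hP : ∀ x : U, P x ∈ Submodule.span ℝ (u '' Set.Icc 1 (n - 1)) ∧
      x - P x ∈ (Submodule.span ℝ (u '' Set.Icc 1 (n - 1)))ᗮ)
    (Q : Y →L[ℝ] Y)
    (hQ : ∀ z : Y, Q z ∈ Submodule.span ℝ ((fun i => A (u i)) '' Set.Icc 1 (n - 1)) ∧
      z - Q z ∈ (Submodule.span ℝ ((fun i => A (u i)) '' Set.Icc 1 (n - 1)))ᗮ)
    (w : U) (hw : A w = A (u n) - Q (A (u n))) :
    ‖u n - P (u n)‖ ≤ ‖w‖ := by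
  have hq : Q (A (u n)) ∈ (Submodule.span ℝ (u '' Set.Icc 1 (n - 1))).map A.toLinearMap := by
    simpa only [Submodule.map_span, Set.image_image, ContinuousLinearMap.coe_coe]
      using (hQ (A (u n))).1
  exact norm_transformed_input_lower_bound_general ((LinearMap.ker_eq_bot.mpr hA).le.trans bot_le)
    (hP (u n)).1 (hP (u n)).2 hq hw
end

section
/- Suppose the union over n of the subspaces span{u^1, ..., u^n} is dense in U. For each n let w_n ∈ U satisfy A w_n = P_{Y_n} y, where Y_n = span{A u^1, ..., A u^n} and P_{Y_n} is the orthogonal projection onto Y_n. If there exists a constant C with ‖w_n‖ ≤ C for all n, then w_n converges weakly to u†, i.e. ⟨w_n, v⟩ → ⟨u†, v⟩ for every v ∈ U. -/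
open scoped RealInnerProductSpace

/-!
Since `A x` lies in the closure of the union of the nested spaces `A (V i)`, its best
approximations `A (w i)` converge to it in norm. Hence `⟪w i, v⟫ → ⟪x, v⟫` for every `v`
representing a functional of the form `f ∘ A`. Injectivity of `A` makes these `v` dense, and
boundedness of `w` makes the functions `⟪w i, ·⟫` equicontinuous, so the convergence extends to
all `v`.
-/

section

open Filter InnerProductSpace Topology
open scoped ComplexConjugate

variable {𝕜 ι E F : Type*} [RCLike 𝕜] [NormedAddCommGroup E] [InnerProductSpace 𝕜 E]

theorem norm_sub_le_of_sub_mem_orthogonal {K : Submodule 𝕜 E} {x p z : E} (hp : p ∈ K)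
    (hxp : x - p ∈ Kᗮ) (hz : z ∈ K) : ‖x - p‖ ≤ ‖x - z‖ :=
  calc ‖x - p‖ = ⨅ q : K, ‖x - q‖ :=
        (K.norm_eq_iInf_iff_inner_eq_zero hp).2 ((K.mem_orthogonal' _).1 hxp)
    _ ≤ ‖x - z‖ := ciInf_le ⟨0, Set.forall_mem_range.2 fun _ ↦ norm_nonneg _⟩ (⟨z, hz⟩ : K)

theorem tendsto_of_sub_mem_orthogonal_of_mem_closure_iUnion [Preorder ι] {K : ι → Submodule 𝕜 E}
    (hK : Monotone K) {x : E} (hx : x ∈ closure (⋃ i, (K i : Set E))) {p : ι → E}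
    (hp : ∀ i, p i ∈ K i) (hxp : ∀ i, x - p i ∈ (K i)ᗮ) : Tendsto p atTop (𝓝 x) := by
  refine Metric.tendsto_nhds.2 fun ε hε ↦ ?_
  obtain ⟨z, hz, hxz⟩ := Metric.mem_closure_iff.1 hx ε hε
  obtain ⟨i, hzi⟩ := Set.mem_iUnion.1 hz
  filter_upwards [eventually_ge_atTop i] with j hij
  calc dist (p j) x = ‖x - p j‖ := dist_eq_norm_sub' _ _
    _ ≤ ‖x - z‖ := norm_sub_le_of_sub_mem_orthogonal (hp j) (hxp j) (hK hij hzi)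
    _ < ε := by rwa [← dist_eq_norm]

theorem equicontinuous_inner_of_norm_le {w : ι → E} {C : ℝ} (hw : ∀ i, ‖w i‖ ≤ C) :
    Equicontinuous fun i v ↦ ⟪w i, v⟫_𝕜 := by
  refine (LipschitzWith.uniformEquicontinuous _ C.toNNReal fun i ↦ ?_).equicontinuous
  refine LipschitzWith.of_dist_le_mul fun v v' ↦ ?_
  rw [dist_eq_norm, dist_eq_norm, ← inner_sub_right]
  exact (norm_inner_le_norm _ _).trans <| mul_le_mul_of_nonneg_right
    ((hw i).trans C.le_coe_toNNReal) (norm_nonneg _)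

theorem tendsto_inner_of_dense {l : Filter ι} {w : ι → E} {C : ℝ} (hw : ∀ i, ‖w i‖ ≤ C)
    {x : E} {s : Set E} (hs : Dense s)
    (hlim : ∀ v ∈ s, Tendsto (fun i ↦ ⟪w i, v⟫_𝕜) l (𝓝 ⟪x, v⟫_𝕜)) (v : E) :
    Tendsto (fun i ↦ ⟪w i, v⟫_𝕜) l (𝓝 ⟪x, v⟫_𝕜) :=
  (equicontinuous_inner_of_norm_le hw v).tendsto_of_mem_closure
    (continuous_const.inner continuous_id).continuousWithinAt hlim (hs v)

section DualAdjoint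

variable [CompleteSpace E] [AddCommGroup F] [Module 𝕜 F] [TopologicalSpace F]

/-- The adjoint of `A` on the dual of its codomain, sending `f` to the Riesz representative of
`f ∘ A`. Unlike `ContinuousLinearMap.adjoint`, this does not identify `F` with its dual, so `F` need
not be a Hilbert space. -/
noncomputable def dualAdjoint (A : E →L[𝕜] F) : StrongDual 𝕜 F →ₗ⋆[𝕜] E where
  toFun f := (toDual 𝕜 E).symm (f ∘L A)
  map_add' f g := by rw [ContinuousLinearMap.add_comp, map_add]
  map_smul' c f := by rw [ContinuousLinearMap.smul_comp, map_smulₛₗ]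

theorem inner_dualAdjoint_left (A : E →L[𝕜] F) (f : StrongDual 𝕜 F) (x : E) :
    ⟪dualAdjoint A f, x⟫_𝕜 = f (A x) :=
  toDual_symm_apply

theorem inner_dualAdjoint_right (A : E →L[𝕜] F) (f : StrongDual 𝕜 F) (x : E) :
    ⟪x, dualAdjoint A f⟫_𝕜 = conj (f (A x)) := by
  rw [← inner_conj_symm, inner_dualAdjoint_left]

theorem orthogonal_range_dualAdjoint [SeparatingDual 𝕜 F] (A : E →L[𝕜] F) :
    (dualAdjoint A).rangeᗮ = A.ker := by
  ext x
  simp [Submodule.mem_orthogonal, inner_dualAdjoint_left,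
    SeparatingDual.eq_zero_iff_forall_dual_eq_zero (R := 𝕜) (A x)]

theorem denseRange_dualAdjoint [SeparatingDual 𝕜 F] {A : E →L[𝕜] F}
    (hA : Function.Injective A) : DenseRange (dualAdjoint A) := by
  have hker : A.ker = ⊥ := LinearMap.ker_eq_bot.2 hA
  have hrange : Dense ((dualAdjoint A).range : Set E) := by
    rw [Submodule.dense_iff_topologicalClosure_eq_top, Submodule.topologicalClosure_eq_top_iff,
      orthogonal_range_dualAdjoint, hker]
  rwa [LinearMap.coe_range] at hrange

theorem tendsto_inner_of_tendsto_dual_map [SeparatingDual 𝕜 F] {A : E →L[𝕜] F}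
    (hA : Function.Injective A) {l : Filter ι} {w : ι → E} {C : ℝ} (hw : ∀ i, ‖w i‖ ≤ C) {x : E}
    (hlim : ∀ f : StrongDual 𝕜 F, Tendsto (fun i ↦ f (A (w i))) l (𝓝 (f (A x)))) (v : E) :
    Tendsto (fun i ↦ ⟪w i, v⟫_𝕜) l (𝓝 ⟪x, v⟫_𝕜) := by
  refine tendsto_inner_of_dense hw (denseRange_dualAdjoint hA) ?_ v
  rintro _ ⟨f, rfl⟩
  simp only [inner_dualAdjoint_right]
  exact (RCLike.continuous_conj.tendsto _).comp (hlim f)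

end DualAdjoint

theorem weak_convergence_of_bounded_projected_solutions_general [CompleteSpace E]
    [NormedAddCommGroup F] [InnerProductSpace 𝕜 F] [Preorder ι] {A : E →L[𝕜] F}
    (hA : Function.Injective A) {V : ι → Submodule 𝕜 E} (hV : Monotone V)
    (hdense : Dense (⋃ i, (V i : Set E))) {x : E} {w : ι → E}
    (hw : ∀ i, A (w i) ∈ (V i).map A.toLinearMap ∧ A x - A (w i) ∈ ((V i).map A.toLinearMap)ᗮ)
    {C : ℝ} (hbound : ∀ i, ‖w i‖ ≤ C) (v : E) :
    Tendsto (fun i ↦ ⟪w i, v⟫_𝕜) atTop (𝓝 ⟪x, v⟫_𝕜) := by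
  have hmapsTo : Set.MapsTo A (⋃ i, (V i : Set E)) (⋃ i, ((V i).map A.toLinearMap : Set F)) :=
    Set.mapsTo_iUnion_iUnion fun i _ hz ↦ Submodule.mem_map_of_mem hz
  have hmono : Monotone fun i ↦ (V i).map A.toLinearMap := fun _ _ hij ↦ Submodule.map_mono (hV hij)
  have hAw : Tendsto (fun i ↦ A (w i)) atTop (𝓝 (A x)) :=
    tendsto_of_sub_mem_orthogonal_of_mem_closure_iUnion hmono
      (map_mem_closure A.continuous (hdense x) hmapsTo) (fun i ↦ (hw i).1) fun i ↦ (hw i).2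
  exact tendsto_inner_of_tendsto_dual_map hA hbound (fun f ↦ (f.continuous.tendsto _).comp hAw) v

end

theorem monotone_span_image_Iio {R M α : Type*} [Semiring R] [AddCommMonoid M] [Module R M]
    [Preorder α] (u : α → M) : Monotone fun a ↦ Submodule.span R (u '' Set.Iio a) :=
  fun _ _ hab ↦ Submodule.span_mono (Set.image_mono (Set.Iio_subset_Iio hab))

theorem iUnion_span_image_Iic_subset_iUnion_span_image_Iio {R M α : Type*} [Semiring R]
    [AddCommMonoid M] [Module R M] [Preorder α] [NoMaxOrder α] (u : α → M) :
    ⋃ a, (Submodule.span R (u '' Set.Iic a) : Set M) ⊆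
      ⋃ a, (Submodule.span R (u '' Set.Iio a) : Set M) :=
  Set.iUnion_subset fun a ↦ by
    obtain ⟨b, hab⟩ := exists_gt a
    exact Set.subset_iUnion_of_subset b
      (Submodule.span_mono (Set.image_mono (Set.Iic_subset_Iio.2 hab)))

/-- Let `U`, `Y` be real Hilbert spaces, `A : U → Y` an injective bounded linear operator,
`(uᵢ)` a sequence in `U` whose spans `span {u₀, …, uₙ}` have dense union in `U`,
`uex ∈ U` and `y = A uex`.  For each `n` let `wₙ ∈ U` satisfy `A wₙ = Q n y`, where
`Q n` is the orthogonal projection onto `Yₙ = span {A u₀, …, A u_{n-1}}`.  If there is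
a constant `C` with `‖wₙ‖ ≤ C` for all `n`, then `wₙ ⇀ uex` weakly, i.e.
`⟪wₙ, v⟫ → ⟪uex, v⟫` for every `v ∈ U`. -/
theorem weak_convergence_of_bounded_projected_solutions
    {U Y : Type*} [NormedAddCommGroup U] [InnerProductSpace ℝ U] [CompleteSpace U]
    [NormedAddCommGroup Y] [InnerProductSpace ℝ Y] [CompleteSpace Y]
    (A : U →L[ℝ] Y) (hA : Function.Injective A)
    (u : ℕ → U)
    (hdense : Dense (⋃ n : ℕ, (Submodule.span ℝ (u '' Set.Iic n) : Set U)))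
    (uex : U) (y : Y) (hy : y = A uex)
    (Q : ℕ → Y →L[ℝ] Y)
    (hQ : ∀ n, ∀ z : Y,
      Q n z ∈ Submodule.span ℝ ((fun i => A (u i)) '' Set.Iio n) ∧
      z - Q n z ∈ (Submodule.span ℝ ((fun i => A (u i)) '' Set.Iio n))ᗮ)
    (w : ℕ → U) (hw : ∀ n, A (w n) = Q n y)
    (C : ℝ) (hbound : ∀ n, ‖w n‖ ≤ C) :
    ∀ v : U, Filter.Tendsto (fun n => ⟪w n, v⟫) Filter.atTop (nhds ⟪uex, v⟫) := by
  subst hy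
  exact weak_convergence_of_bounded_projected_solutions_general hA (monotone_span_image_Iio u)
    (hdense.mono (iUnion_span_image_Iic_subset_iUnion_span_image_Iio u))
    (fun n ↦ by simpa [hw, Submodule.map_span, Set.image_image] using hQ n (A uex)) hbound
end

section
/- Assume: (i) Σ_{i=1}^∞ |⟨u†, e^i⟩| =: S < ∞; and (ii) there is a constant C > 0 such that for every n ≥ 1 and every i ≥ n+1, every w ∈ span{e^1, ..., e^n} with A w = P_{Y_n} f^i satisfies ‖w‖² ≤ C, where Y_n = span{f^1, ..., f^n} and P_{Y_n} is the orthogonal projection onto Y_n. Then for every n ≥ 1, every w ∈ U with A w = P_{Y_n}(A u†) satisfies ‖w‖ ≤ S · √(max(C, 1)); in particular the minimum-norm solutions of the projected problems are uniformly bounded in n. -/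
/-!
Put `V = span {e⁰, …, eⁿ⁻¹}`, so that `Yₙ = A V`. Since `V` is finite-dimensional and `A` is
injective, `R = (A|_V)⁻¹ ∘ P_{A V} ∘ A` is a bounded projection of `U` onto `V`, and the only
solution of `A w = P_{A V} (A u)` is `w = R u`. Expanding `u = ∑ᵢ ⟪u, eⁱ⟫ eⁱ` and applying `R` term
by term gives `‖R u‖ ≤ ∑ᵢ |⟪u, eⁱ⟫| ‖R eⁱ‖`, where `R eⁱ = eⁱ` for `i < n` and
`‖R eⁱ‖² ≤ C` for `i ≥ n`.
-/

open scoped RealInnerProductSpace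

section FourierExpansion

open Filter Submodule
open scoped Topology

variable {𝕜 E ι : Type*} [RCLike 𝕜] [NormedAddCommGroup E] [InnerProductSpace 𝕜 E]

theorem tendsto_starProjection_of_mem_closure_iSup [Preorder ι] [IsDirectedOrder ι] [Nonempty ι]
    {K : ι → Submodule 𝕜 E} [∀ i, (K i).HasOrthogonalProjection] (hK : Monotone K) {x : E}
    (hx : x ∈ (⨆ i, K i).topologicalClosure) :
    Tendsto (fun i => (K i).starProjection x) atTop (𝓝 x) := by
  have equicontinuous : Equicontinuous fun i => ⇑(K i).starProjection :=
    (LipschitzWith.uniformEquicontinuous _ 1 fun i =>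
      (K i).lipschitzWith_starProjection).equicontinuous
  refine (equicontinuous x).tendsto_of_mem_closure (f := id) (s := SetLike.coe (⨆ i, K i))
    (tendsto_id.mono_left nhdsWithin_le_nhds) (fun y hy => ?_) hx
  obtain ⟨i, hyi⟩ := (mem_iSup_of_directed K hK.directed_le).1 hy
  refine tendsto_const_nhds.congr' ?_
  filter_upwards [eventually_ge_atTop i] with j hij
  exact (starProjection_eq_self_iff.2 (hK hij hyi)).symm

theorem starProjection_span_image_finset {e : ι → E} (he : Orthonormal 𝕜 e) (s : Finset ι)
    [(span 𝕜 (e '' s)).HasOrthogonalProjection] (x : E) :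
    (span 𝕜 (e '' s)).starProjection x = ∑ i ∈ s, inner 𝕜 (e i) x • e i := by
  have sum_mem : ∑ i ∈ s, inner 𝕜 (e i) x • e i ∈ span 𝕜 (e '' s) :=
    Submodule.sum_mem _ fun i hi => smul_mem _ _ (subset_span (Set.mem_image_of_mem e hi))
  refine eq_starProjection_of_mem_orthogonal sum_mem ?_
  suffices span 𝕜 (e '' s) ⟂ span 𝕜 {x - ∑ i ∈ s, inner 𝕜 (e i) x • e i} from
    this.symm (mem_span_singleton_self _)
  rw [isOrtho_span]
  rintro _ ⟨i, hi, rfl⟩ _ rfl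
  rw [inner_sub_right, he.inner_right_sum _ hi, sub_self]

theorem hasSum_inner_smul_of_mem_closure_span {e : ι → E} (he : Orthonormal 𝕜 e) {x : E}
    (hx : x ∈ (span 𝕜 (Set.range e)).topologicalClosure) :
    HasSum (fun i => inner 𝕜 (e i) x • e i) x := by
  let K (s : Finset ι) : Submodule 𝕜 E := span 𝕜 (e '' s)
  have (s : Finset ι) : FiniteDimensional 𝕜 (K s) :=
    .span_of_finite 𝕜 (s.finite_toSet.image e)
  have monotone : Monotone K := fun _ _ hst => span_mono (Set.image_mono hst)
  have range_le : span 𝕜 (Set.range e) ≤ ⨆ s, K s :=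
    span_le.2 <| Set.range_subset_iff.2 fun i =>
      mem_iSup_of_mem {i} (subset_span ⟨i, by simp, rfl⟩)
  exact (tendsto_starProjection_of_mem_closure_iSup monotone
    (topologicalClosure_mono range_le hx)).congr
      fun s => starProjection_span_image_finset he s x

end FourierExpansion

theorem norm_apply_le_of_hasSum_smul {𝕜 E F ι : Type*} [NormedField 𝕜]
    [SeminormedAddCommGroup E] [NormedSpace 𝕜 E] [SeminormedAddCommGroup F] [NormedSpace 𝕜 F]
    (T : E →L[𝕜] F) {c : ι → 𝕜} {e : ι → E} {x : E} {S M : ℝ}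
    (hx : HasSum (fun i => c i • e i) x) (hS : HasSum (fun i => ‖c i‖) S)
    (hM : ∀ i, ‖T (e i)‖ ≤ M) : ‖T x‖ ≤ S * M := by
  refine (hx.mapL T).norm_le_of_bounded (hS.mul_right M) fun i => ?_
  rw [map_smul, norm_smul]
  exact mul_le_mul_of_nonneg_left (hM i) (norm_nonneg _)

section LeastSquares

open Submodule

variable {𝕜 U Y : Type*} [RCLike 𝕜] [NormedAddCommGroup U] [NormedSpace 𝕜 U]
  [NormedAddCommGroup Y] [InnerProductSpace 𝕜 Y]

/-- The least-squares projection `(A|_V)⁻¹ ∘ P_{A V} ∘ A` of `U` onto a finite-dimensional subspace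
`V`: it sends `u` to the element `v` of `V` that minimizes `‖A v - A u‖`. Finite dimension of `V`
makes it a bounded operator. -/
noncomputable def leastSquaresProjection (A : U →L[𝕜] Y) (hA : Function.Injective A)
    (V : Submodule 𝕜 U) [FiniteDimensional 𝕜 V] : U →L[𝕜] U :=
  let inverse : V.map A.toLinearMap →L[𝕜] V :=
    (V.equivMapOfInjective A.toLinearMap hA).symm.toLinearMap.toContinuousLinearMap
  V.subtypeL ∘L inverse ∘L (V.map A.toLinearMap).orthogonalProjectionOnto ∘L A

variable {A : U →L[𝕜] Y} (hA : Function.Injective A) (V : Submodule 𝕜 U) [FiniteDimensional 𝕜 V]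

theorem leastSquaresProjection_mem (u : U) : leastSquaresProjection A hA V u ∈ V :=
  SetLike.coe_mem _

theorem map_leastSquaresProjection (u : U) :
    A (leastSquaresProjection A hA V u) = (V.map A.toLinearMap).starProjection (A u) :=
  map_equivMapOfInjective_symm_apply A.toLinearMap hA V _

variable {V} in
theorem leastSquaresProjection_eq_self {u : U} (hu : u ∈ V) :
    leastSquaresProjection A hA V u = u :=
  hA <| (map_leastSquaresProjection hA V u).trans <|
    starProjection_eq_self_iff.2 (mem_map_of_mem hu)

end LeastSquares

open Submodule in
theorem uniform_bound_of_projected_solutions_general {𝕜 U Y ι : Type*} [RCLike 𝕜]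
    [NormedAddCommGroup U] [NormedSpace 𝕜 U] [NormedAddCommGroup Y] [InnerProductSpace 𝕜 Y]
    {A : U →L[𝕜] Y} (hA : Function.Injective A)
    {e : ι → U} {c : ι → 𝕜} {u : U} {S : ℝ} (hu : HasSum (fun i => c i • e i) u)
    (hS : HasSum (fun i => ‖c i‖) S) {s : Set ι} (hs : s.Finite) (he : ∀ i ∈ s, ‖e i‖ ≤ 1)
    {P : Y → Y} (hP : ∀ z, P z ∈ span 𝕜 ((fun i => A (e i)) '' s) ∧
      z - P z ∈ (span 𝕜 ((fun i => A (e i)) '' s))ᗮ)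
    {C : ℝ} (hC : ∀ i ∉ s, ∀ w ∈ span 𝕜 (e '' s), A w = P (A (e i)) → ‖w‖ ^ 2 ≤ C)
    {w : U} (hw : A w = P (A u)) : ‖w‖ ≤ S * √(max C 1) := by
  let V := span 𝕜 (e '' s)
  have : FiniteDimensional 𝕜 V := .span_of_finite 𝕜 (hs.image e)
  let R := leastSquaresProjection A hA V
  have span_eq_map : span 𝕜 ((fun i => A (e i)) '' s) = V.map A.toLinearMap := by
    rw [map_span, Set.image_image]
    rfl
  have map_R (v : U) : A (R v) = P (A v) := by
    rw [span_eq_map] at hP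
    rw [map_leastSquaresProjection]
    exact eq_starProjection_of_mem_orthogonal (hP (A v)).1 (hP (A v)).2
  have norm_R_le (i : ι) : ‖R (e i)‖ ≤ √(max C 1) := by
    by_cases hi : i ∈ s
    · rw [leastSquaresProjection_eq_self hA (subset_span (Set.mem_image_of_mem e hi))]
      exact (he i hi).trans (Real.one_le_sqrt.2 (le_max_right C 1))
    · exact Real.le_sqrt_of_sq_le <|
        (hC i hi _ (leastSquaresProjection_mem hA V _) (map_R _)).trans (le_max_left C 1)
  rw [hA (hw.trans (map_R u).symm)]
  exact norm_apply_le_of_hasSum_smul R hu hS norm_R_le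

/-- Let `U`, `Y` be real Hilbert spaces, `A : U → Y` an injective bounded linear operator,
`(eᵢ)` an orthonormal sequence in `U` with `fᵢ = A eᵢ`, and `uex ∈ U` in the closed
linear span of the `eᵢ`.  Assume (i) `Σᵢ |⟪uex, eᵢ⟫| = S < ∞`; (ii) there is `C > 0`
such that for every `n ≥ 1` and every `i ≥ n+1` (0-based: `i ≥ n`), every
`w ∈ span {e₀, …, e_{n-1}}` with `A w = Q n fᵢ` satisfies `‖w‖² ≤ C`, where `Q n` is
the orthogonal projection onto `Yₙ = span {f₀, …, f_{n-1}}`.  Then for every `n ≥ 1`,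
every `w ∈ U` with `A w = Q n (A uex)` satisfies `‖w‖ ≤ S · √(max C 1)`. -/
theorem uniform_bound_of_projected_solutions
    {U Y : Type*} [NormedAddCommGroup U] [InnerProductSpace ℝ U] [CompleteSpace U]
    [NormedAddCommGroup Y] [InnerProductSpace ℝ Y] [CompleteSpace Y]
    (A : U →L[ℝ] Y) (hA : Function.Injective A)
    (e : ℕ → U) (he : Orthonormal ℝ e)
    (uex : U)
    (huex : uex ∈ (Submodule.span ℝ (Set.range e)).topologicalClosure)
    (hsummable : Summable (fun i : ℕ => |⟪uex, e i⟫|))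
    (S : ℝ) (hS : ∑' i : ℕ, |⟪uex, e i⟫| = S)
    (Q : ℕ → Y →L[ℝ] Y)
    (hQ : ∀ n, ∀ z : Y,
      Q n z ∈ Submodule.span ℝ ((fun i => A (e i)) '' Set.Iio n) ∧
      z - Q n z ∈ (Submodule.span ℝ ((fun i => A (e i)) '' Set.Iio n))ᗮ)
    (C : ℝ) (hC : 0 < C)
    (hcoef : ∀ n : ℕ, 1 ≤ n → ∀ i : ℕ, n ≤ i →
      ∀ w ∈ Submodule.span ℝ (e '' Set.Iio n),
        A w = Q n (A (e i)) → ‖w‖ ^ 2 ≤ C) :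
    ∀ n : ℕ, 1 ≤ n → ∀ w : U, A w = Q n (A uex) →
      ‖w‖ ≤ S * Real.sqrt (max C 1) := by
  intro n hn w hw
  have fourier : HasSum (fun i => ⟪uex, e i⟫ • e i) uex := by
    simpa only [real_inner_comm] using hasSum_inner_smul_of_mem_closure_span he huex
  exact uniform_bound_of_projected_solutions_general hA fourier (hS ▸ hsummable.hasSum)
    (Set.finite_Iio n) (fun i _ => (he.1 i).le) (hQ n)
    (fun i hi => hcoef n hn i (not_lt.1 hi)) hw
end

section
/- Fix i ≥ 2 with u^i ∉ U_{i-1} and set û^i = (u^i − P_{U_{i-1}} u^i)/‖u^i − P_{U_{i-1}} u^i‖. Assume there is a constant C > 0 such that every w ∈ U_{i-1} with A w = P_{Y_{i-1}}(A û^i) satisfies ‖w‖² ≤ C. Then every w ∈ U with A w = y^i − P_{Y_{i-1}} y^i satisfies ‖w‖ ≤ √(C+1) · ‖u^i − P_{U_{i-1}} u^i‖; consequently the normalized element ū^i = w/‖y^i − P_{Y_{i-1}} y^i‖ satisfies ‖ū^i‖ ≤ √(C+1) · ‖u^i − P_{U_{i-1}} u^i‖ / ‖y^i − P_{Y_{i-1}}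 y^i‖. -/
/-!
Let `P` and `Q` be the orthogonal projections onto `K` and `A(K)`, and let `r = x - P x`. If
`A w = A x - Q (A x)`, then injectivity of `A` gives `w - x ∈ K`, so `w - P w = r`, and `A` sends
`P w` to `-Q (A r)`. Hence `-‖r‖⁻¹ P w` is one of the elements of `K` whose squared norm is at most
`C`, and Pythagoras gives `‖w‖² = ‖P w‖² + ‖r‖² ≤ (C + 1) ‖r‖²`.
-/

theorem sub_mem_of_map_eq_sub_starProjection
    {𝕜 E F : Type*} [RCLike 𝕜] [AddCommGroup E] [Module 𝕜 E]
    [NormedAddCommGroup F] [InnerProductSpace 𝕜 F]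
    {A : E →ₗ[𝕜] F} {K : Submodule 𝕜 E} [(K.map A).HasOrthogonalProjection] {x w : E}
    (hA : Function.Injective A)
    (hw : A w = A x - (K.map A).starProjection (A x)) : w - x ∈ K := by
  have hmem : A (w - x) ∈ K.map A := by
    rw [map_sub, hw, sub_sub_cancel_left]
    exact neg_mem (Submodule.starProjection_apply_mem _ _)
  exact hA.mem_set_image.mp hmem

section

variable {𝕜 E F : Type*} [RCLike 𝕜] [NormedAddCommGroup E] [InnerProductSpace 𝕜 E]

theorem exists_eq_starProjection {K : Submodule 𝕜 E} {P : E → E}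
    (hP : ∀ x, P x ∈ K ∧ x - P x ∈ Kᗮ) :
    ∃ _ : K.HasOrthogonalProjection, P = K.starProjection :=
  have : K.HasOrthogonalProjection := ⟨fun x => ⟨P x, hP x⟩⟩
  ⟨this, funext fun x => (Submodule.eq_starProjection_of_mem_orthogonal (hP x).1 (hP x).2).symm⟩

theorem sub_starProjection_eq_of_sub_mem {K : Submodule 𝕜 E} [K.HasOrthogonalProjection]
    {x y : E} (h : x - y ∈ K) :
    x - K.starProjection x = y - K.starProjection y := by
  have hfix : K.starProjection x - K.starProjection y = x - y := by
    rw [← map_sub, Submodule.starProjection_eq_self_iff.mpr h]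
  exact sub_eq_sub_iff_sub_eq_sub.mpr hfix.symm

variable [NormedAddCommGroup F] [InnerProductSpace 𝕜 F] {A : E →ₗ[𝕜] F}
  {K : Submodule 𝕜 E} [K.HasOrthogonalProjection] [(K.map A).HasOrthogonalProjection] {x w : E}

theorem map_starProjection_eq_neg_of_map_eq_sub_starProjection (hA : Function.Injective A)
    (hw : A w = A x - (K.map A).starProjection (A x)) :
    A (K.starProjection w) = -(K.map A).starProjection (A (x - K.starProjection x)) := by
  have hres : w - K.starProjection w = x - K.starProjection x :=
    sub_starProjection_eq_of_sub_mem (sub_mem_of_map_eq_sub_starProjection hA hw)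
  have hfix : (K.map A).starProjection (A (K.starProjection x)) = A (K.starProjection x) :=
    Submodule.starProjection_eq_self_iff.mpr
      (Submodule.mem_map_of_mem (Submodule.starProjection_apply_mem K x))
  calc A (K.starProjection w) = A w - A (x - K.starProjection x) := by
        rw [← hres, map_sub, sub_sub_cancel]
    _ = A (K.starProjection x) - (K.map A).starProjection (A x) := by
        rw [hw, map_sub]; abel
    _ = -(K.map A).starProjection (A (x - K.starProjection x)) := by
        rw [map_sub, map_sub, hfix, neg_sub]

theorem norm_le_sqrt_mul_norm_sub_starProjection (hA : Function.Injective A) {C : ℝ}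
    (hC : ∀ v ∈ K, A v = (K.map A).starProjection (A (x - K.starProjection x)) →
      ‖v‖ ^ 2 ≤ C * ‖x - K.starProjection x‖ ^ 2)
    (hw : A w = A x - (K.map A).starProjection (A x)) :
    ‖w‖ ≤ √(C + 1) * ‖x - K.starProjection x‖ := by
  have hcomp : ‖K.starProjection w‖ ^ 2 ≤ C * ‖x - K.starProjection x‖ ^ 2 := by
    rw [← norm_neg]
    refine hC _ (neg_mem (Submodule.starProjection_apply_mem K w)) ?_
    rw [map_neg, map_starProjection_eq_neg_of_map_eq_sub_starProjection hA hw, neg_neg]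
  have hsq : ‖w‖ ^ 2 ≤ (C + 1) * ‖x - K.starProjection x‖ ^ 2 :=
    calc ‖w‖ ^ 2 = ‖K.starProjection w‖ ^ 2 + ‖x - K.starProjection x‖ ^ 2 := by
          rw [Submodule.norm_sq_eq_add_norm_sq_starProjection w K,
            Submodule.starProjection_orthogonal_val, sub_starProjection_eq_of_sub_mem
              (sub_mem_of_map_eq_sub_starProjection hA hw)]
      _ ≤ C * ‖x - K.starProjection x‖ ^ 2 + ‖x - K.starProjection x‖ ^ 2 := by gcongr
      _ = (C + 1) * ‖x - K.starProjection x‖ ^ 2 := by ring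
  calc ‖w‖ ≤ √((C + 1) * ‖x - K.starProjection x‖ ^ 2) := Real.le_sqrt_of_sq_le hsq
    _ = √(C + 1) * ‖x - K.starProjection x‖ := by
        rw [Real.sqrt_mul' _ (sq_nonneg _), Real.sqrt_sq (norm_nonneg _)]

end

theorem norm_sq_le_mul_norm_sq_of_normalized {𝕜 E F G : Type*} [RCLike 𝕜]
    [SeminormedAddCommGroup E] [NormedSpace 𝕜 E] [NormedAddCommGroup F] [NormedSpace 𝕜 F]
    [AddCommGroup G] [Module 𝕜 G] {A : E →ₗ[𝕜] G} {B : F →ₗ[𝕜] G}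
    {K : Submodule 𝕜 E} {r : F} (hr : r ≠ 0) {C : ℝ}
    (hC : ∀ v ∈ K, A v = B (((‖r‖⁻¹ : ℝ) : 𝕜) • r) → ‖v‖ ^ 2 ≤ C)
    {v : E} (hv : v ∈ K) (hAv : A v = B r) : ‖v‖ ^ 2 ≤ C * ‖r‖ ^ 2 := by
  have hscaled : ‖((‖r‖⁻¹ : ℝ) : 𝕜) • v‖ ^ 2 ≤ C :=
    hC _ (K.smul_mem _ hv) (by rw [map_smul, map_smul, hAv])
  have hnorm : ‖((‖r‖⁻¹ : ℝ) : 𝕜) • v‖ = ‖v‖ / ‖r‖ := by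
    rw [norm_smul, RCLike.norm_ofReal, abs_inv, abs_norm, inv_mul_eq_div]
  rwa [hnorm, div_pow, div_le_iff₀ (by positivity)] at hscaled

theorem norm_transformed_input_upper_bound_general
    {𝕜 U Y : Type*} [RCLike 𝕜] [NormedAddCommGroup U] [InnerProductSpace 𝕜 U]
    [NormedAddCommGroup Y] [InnerProductSpace 𝕜 Y]
    {A : U →ₗ[𝕜] Y} (hA : Function.Injective A) {K : Submodule 𝕜 U} {x : U} (hx : x ∉ K)
    {P : U → U} (hP : ∀ z, P z ∈ K ∧ z - P z ∈ Kᗮ)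
    {Q : Y → Y} (hQ : ∀ z, Q z ∈ K.map A ∧ z - Q z ∈ (K.map A)ᗮ)
    {xhat : U} (hxhat : xhat = ((‖x - P x‖⁻¹ : ℝ) : 𝕜) • (x - P x))
    {C : ℝ} (hcoef : ∀ v ∈ K, A v = Q (A xhat) → ‖v‖ ^ 2 ≤ C)
    {w : U} (hw : A w = A x - Q (A x)) :
    ‖w‖ ≤ √(C + 1) * ‖x - P x‖ ∧
      ‖((‖A x - Q (A x)‖⁻¹ : ℝ) : 𝕜) • w‖ ≤ √(C + 1) * ‖x - P x‖ / ‖A x - Q (A x)‖ := by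
  obtain ⟨_, rfl⟩ := exists_eq_starProjection hP
  obtain ⟨_, rfl⟩ := exists_eq_starProjection hQ
  subst hxhat
  have hr : x - K.starProjection x ≠ 0 := fun h =>
    hx (Submodule.starProjection_eq_self_iff.mp (sub_eq_zero.mp h).symm)
  have hbound : ‖w‖ ≤ √(C + 1) * ‖x - K.starProjection x‖ :=
    norm_le_sqrt_mul_norm_sub_starProjection hA
      (fun _ => norm_sq_le_mul_norm_sq_of_normalized
        (B := (K.map A).starProjection.toLinearMap ∘ₗ A) hr hcoef) hw
  refine ⟨hbound, ?_⟩
  rw [norm_smul, RCLike.norm_ofReal, abs_inv, abs_norm, inv_mul_eq_div]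
  gcongr

/-- Let `U`, `Y` be real Hilbert spaces, `A : U → Y` an injective bounded linear operator,
`(uᵢ)` a linearly independent sequence in `U`, `yᵢ = A uᵢ`,
`U_{i-1} = span {u₀, …, u_{i-1}}`, `Y_{i-1} = span {y₀, …, y_{i-1}}` with orthogonal
projections `P`, `Q` (0-based: the paper's index `i ≥ 2` is `i ≥ 1` here).  Fix `i ≥ 1`
with `uᵢ ∉ U_{i-1}` and set `ûᵢ = (uᵢ − P uᵢ)/‖uᵢ − P uᵢ‖`.  Assume there is `C > 0`
such that every `w ∈ U_{i-1}` with `A w = Q (A ûᵢ)` satisfies `‖w‖² ≤ C`.  Then every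
`w ∈ U` with `A w = yᵢ − Q yᵢ` satisfies `‖w‖ ≤ √(C+1) · ‖uᵢ − P uᵢ‖`; consequently
`ūᵢ = w/‖yᵢ − Q yᵢ‖` satisfies `‖ūᵢ‖ ≤ √(C+1) · ‖uᵢ − P uᵢ‖ / ‖yᵢ − Q yᵢ‖`. -/
theorem norm_transformed_input_upper_bound
    {U Y : Type*} [NormedAddCommGroup U] [InnerProductSpace ℝ U] [CompleteSpace U]
    [NormedAddCommGroup Y] [InnerProductSpace ℝ Y] [CompleteSpace Y]
    (A : U →L[ℝ] Y) (hA : Function.Injective A)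
    (u : ℕ → U) (hindep : LinearIndependent ℝ u)
    (i : ℕ) (hi : 1 ≤ i)
    (hnotmem : u i ∉ Submodule.span ℝ (u '' Set.Iio i))
    (P : U →L[ℝ] U)
    (hP : ∀ x : U, P x ∈ Submodule.span ℝ (u '' Set.Iio i) ∧
      x - P x ∈ (Submodule.span ℝ (u '' Set.Iio i))ᗮ)
    (Q : Y →L[ℝ] Y)
    (hQ : ∀ z : Y, Q z ∈ Submodule.span ℝ ((fun j => A (u j)) '' Set.Iio i) ∧
      z - Q z ∈ (Submodule.span ℝ ((fun j => A (u j)) '' Set.Iio i))ᗮ)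
    (uhat : U) (huhat : uhat = ‖u i - P (u i)‖⁻¹ • (u i - P (u i)))
    (C : ℝ) (hC : 0 < C)
    (hcoef : ∀ w ∈ Submodule.span ℝ (u '' Set.Iio i),
      A w = Q (A uhat) → ‖w‖ ^ 2 ≤ C) :
    ∀ w : U, A w = A (u i) - Q (A (u i)) →
      ‖w‖ ≤ Real.sqrt (C + 1) * ‖u i - P (u i)‖ ∧
      ‖(‖A (u i) - Q (A (u i))‖⁻¹ • w)‖
        ≤ Real.sqrt (C + 1) * ‖u i - P (u i)‖ / ‖A (u i) - Q (A (u i))‖ := by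
  have hmap := (Submodule.map_span A.toLinearMap (u '' Set.Iio i)).trans (by rw [Set.image_image])
  exact fun _ => norm_transformed_input_upper_bound_general hA hnotmem hP (hmap ▸ hQ) huhat hcoef
end

section
/- If Σ_{i=1}^∞ |⟨y, ȳ^i⟩| · ‖ū^i‖ < ∞, then the partial sums s_n := Σ_{i=1}^n ⟨y, ȳ^i⟩ ū^i converge in norm to u† as n → ∞. -/
open scoped RealInnerProductSpace

/-!
The series converges absolutely, so it has some sum `s` in `U`, and applying `A` termwise shows that
the Fourier series `∑ᵢ ⟪y, ȳᵢ⟫ ȳᵢ` converges to `A s`. Hence `y` and `A s` both lie in the closed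
span of the `ȳᵢ` and have the same Fourier coefficients, so `A s = y = A u†`, and injectivity of `A`
gives `s = u†`.
-/

section InnerProductSpace

variable {𝕜 E ι : Type*} [RCLike 𝕜] [NormedAddCommGroup E] [InnerProductSpace 𝕜 E]

theorem eq_of_mem_topologicalClosure_span_of_inner_eq {S : Set E} {x y : E}
    (hx : x ∈ (Submodule.span 𝕜 S).topologicalClosure)
    (hy : y ∈ (Submodule.span 𝕜 S).topologicalClosure)
    (h : ∀ v ∈ S, inner 𝕜 v x = inner 𝕜 v y) : x = y := by
  have h_span : x - y ∈ (Submodule.span 𝕜 S)ᗮ := by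
    have h_ortho : Submodule.span 𝕜 S ⟂ Submodule.span 𝕜 {x - y} :=
      Submodule.isOrtho_span.2 fun v hv w hw ↦ by
        rw [Set.mem_singleton_iff.1 hw, inner_sub_right, h v hv, sub_self]
    exact h_ortho.ge (Submodule.mem_span_singleton_self _)
  rw [← Submodule.orthogonal_closure] at h_span
  exact sub_eq_zero.1 <|
    Submodule.disjoint_def.1 (Submodule.orthogonal_disjoint _) _ (sub_mem hx hy) h_span

variable {v : ι → E} {c : ι → 𝕜} {x y : E} {L : SummationFilter ι} [L.NeBot]

theorem mem_topologicalClosure_span_of_hasSum_smul (h : HasSum (fun i ↦ c i • v i) x L) :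
    x ∈ (Submodule.span 𝕜 (Set.range v)).topologicalClosure :=
  mem_closure_of_tendsto h <| .of_forall fun _ ↦
    sum_mem fun i _ ↦ Submodule.smul_mem _ _ (Submodule.subset_span ⟨i, rfl⟩)

variable [L.LeAtTop]

theorem inner_eq_coeff_of_hasSum_smul (hv : Orthonormal 𝕜 v)
    (h : HasSum (fun i ↦ c i • v i) x L) (j : ι) : inner 𝕜 (v j) x = c j := by
  have h_inner : HasSum (fun i ↦ inner 𝕜 (v j) (c i • v i)) (inner 𝕜 (v j) x) L :=
    h.mapL (innerSL 𝕜 (v j))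
  have h_single : HasSum (fun i ↦ inner 𝕜 (v j) (c i • v i)) (inner 𝕜 (v j) (c j • v j)) L :=
    hasSum_single j (L := L) fun i hij ↦ by
      rw [inner_smul_right, hv.inner_eq_zero hij.symm, mul_zero]
  rw [h_inner.unique h_single, inner_smul_right, inner_self_eq_one_of_norm_eq_one (hv.1 j), mul_one]

theorem eq_of_hasSum_inner_smul (hv : Orthonormal 𝕜 v)
    (hy : y ∈ (Submodule.span 𝕜 (Set.range v)).topologicalClosure)
    (h : HasSum (fun i ↦ inner 𝕜 (v i) y • v i) x L) : x = y :=
  eq_of_mem_topologicalClosure_span_of_inner_eq (mem_topologicalClosure_span_of_hasSum_smul h) hy <|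
    Set.forall_mem_range.2 (inner_eq_coeff_of_hasSum_smul hv h)

/-- For `L = SummationFilter.conditional ℕ`, summability is convergence of the partial sums. -/
theorem strong_convergence_of_absolutely_convergent_series_general
    {U : Type*} [AddCommGroup U] [Module 𝕜 U] [TopologicalSpace U]
    {A : U →L[𝕜] E} (hA : Function.Injective A) (hv : Orthonormal 𝕜 v) {u : U}
    (hu : A u ∈ (Submodule.span 𝕜 (Set.range v)).topologicalClosure)
    {w : ι → U} (hw : ∀ i, A (w i) = v i)
    (h : Summable (fun i ↦ inner 𝕜 (v i) (A u) • w i) L) :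
    HasSum (fun i ↦ inner 𝕜 (v i) (A u) • w i) u L := by
  obtain ⟨s, hs⟩ := h
  have h_image : HasSum (fun i ↦ inner 𝕜 (v i) (A u) • v i) (A s) L := by
    simpa only [map_smul, hw] using hs.mapL A
  rwa [hA (eq_of_hasSum_inner_smul hv hu h_image)] at hs

end InnerProductSpace

/-- Let `U`, `Y` be real Hilbert spaces, `A : U → Y` an injective bounded linear operator,
`uex ∈ U`, `y = A uex`.  Let `(ȳᵢ)` be an orthonormal sequence in `Y` such that `y`
lies in the closed linear span of the `ȳᵢ`, and `ūᵢ ∈ U` with `A ūᵢ = ȳᵢ`.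
If `Σᵢ |⟪y, ȳᵢ⟫| · ‖ūᵢ‖ < ∞`, then the partial sums `sₙ = Σ_{i<n} ⟪y, ȳᵢ⟫ ūᵢ`
converge in norm to `uex`. -/
theorem strong_convergence_of_absolutely_convergent_series
    {U Y : Type*} [NormedAddCommGroup U] [InnerProductSpace ℝ U] [CompleteSpace U]
    [NormedAddCommGroup Y] [InnerProductSpace ℝ Y] [CompleteSpace Y]
    (A : U →L[ℝ] Y) (hA : Function.Injective A)
    (uex : U) (y : Y) (hy : y = A uex)
    (yb : ℕ → Y) (hyb : Orthonormal ℝ yb)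
    (hyspan : y ∈ (Submodule.span ℝ (Set.range yb)).topologicalClosure)
    (ub : ℕ → U) (hub : ∀ i, A (ub i) = yb i)
    (habs : Summable (fun i : ℕ => |⟪y, yb i⟫| * ‖ub i‖)) :
    Filter.Tendsto (fun n : ℕ => ∑ i ∈ Finset.range n, ⟪y, yb i⟫ • ub i)
      Filter.atTop (nhds uex) := by
  subst hy
  have h_summable : Summable fun i ↦ ⟪yb i, A uex⟫ • ub i :=
    .of_norm <| by simpa only [norm_smul, Real.norm_eq_abs, real_inner_comm] using habs
  simpa only [real_inner_comm] using
    (strong_convergence_of_absolutely_convergent_series_general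
      hA hyb hyspan hub h_summable).tendsto_sum_nat
end

section
/- Assume: (i) there is a constant C₁ with |⟨y, ȳ^i⟩| ≤ C₁ · ‖y^i − P_{Y_{i-1}} y^i‖ for all i; (ii) Σ_{i=1}^∞ ‖u^i − P_{U_{i-1}} u^i‖ < ∞; and (iii) there is a constant C₂ with ‖ū^i‖ ≤ C₂ · ‖u^i − P_{U_{i-1}} u^i‖ / ‖y^i − P_{Y_{i-1}} y^i‖ for all i. Then the partial sums Σ_{i=1}^n ⟨y, ȳ^i⟩ ū^i converge in norm to u† as n → ∞, i.e. regularisation by projection converges strongly to the exact solution. -/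
open scoped RealInnerProductSpace

/-!
In the product of the bounds on `⟪ȳᵢ, y⟫` and `‖ūᵢ‖` the norms `‖yᵢ − Q i yᵢ‖` cancel, so the series
`Σ ⟪ȳᵢ, y⟫ ūᵢ` converges absolutely in `U`. Its image under `A` is the Fourier series
`Σ ⟪ȳᵢ, y⟫ ȳᵢ`, whose sum is `y` because `y` lies in the closed span of the orthonormal family `ȳ`.
Injectivity of `A` then identifies the limit.
-/

open InnerProductSpace Submodule

section FourierSeries

variable {𝕜 ι E : Type*} [RCLike 𝕜] [NormedAddCommGroup E] [InnerProductSpace 𝕜 E]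

theorem mem_orthogonal_span_iff {s : Set E} {x : E} :
    x ∈ (span 𝕜 s)ᗮ ↔ ∀ v ∈ s, inner 𝕜 v x = 0 := by
  refine ⟨fun hx v hv => inner_right_of_mem_orthogonal (subset_span hv) hx, fun hx => ?_⟩
  have hle : span 𝕜 s ≤ (𝕜 ∙ x)ᗮ :=
    span_le.mpr fun v hv => mem_orthogonal_singleton_iff_inner_left.mpr (hx v hv)
  exact fun v hv => mem_orthogonal_singleton_iff_inner_left.mp (hle hv)

theorem starProjection_span_image_eq_sum_inner_smul {e : ι → E} (he : Orthonormal 𝕜 e)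
    (s : Finset ι) [(span 𝕜 (e '' s)).HasOrthogonalProjection] (y : E) :
    (span 𝕜 (e '' s)).starProjection y = ∑ i ∈ s, inner 𝕜 (e i) y • e i := by
  have hmem : ∑ i ∈ s, inner 𝕜 (e i) y • e i ∈ span 𝕜 (e '' s) :=
    sum_mem fun i hi => smul_mem _ _ (subset_span ⟨i, hi, rfl⟩)
  have horth : y - ∑ i ∈ s, inner 𝕜 (e i) y • e i ∈ (span 𝕜 (e '' s))ᗮ := by
    refine mem_orthogonal_span_iff.mpr ?_
    rintro _ ⟨j, hj, rfl⟩
    rw [inner_sub_right, he.inner_right_sum _ hj, sub_self]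
  exact eq_starProjection_of_mem_orthogonal hmem horth

theorem hasSum_inner_smul_of_mem_topologicalClosure_span {e : ι → E} (he : Orthonormal 𝕜 e)
    {y : E} (hy : y ∈ (span 𝕜 (Set.range e)).topologicalClosure) :
    HasSum (fun i => inner 𝕜 (e i) y • e i) y := by
  rw [← SetLike.mem_coe, topologicalClosure_coe] at hy
  classical
  rw [HasSum, SummationFilter.unconditional_filter, Metric.tendsto_atTop]
  intro ε hε
  obtain ⟨a, ha, hya⟩ := Metric.mem_closure_iff.mp hy ε hε
  obtain ⟨s, hs⟩ : ∃ s : Finset ι, a ∈ span 𝕜 (e '' s) := by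
    obtain ⟨c, rfl⟩ := Finsupp.mem_span_range_iff_exists_finsupp.mp ha
    exact ⟨c.support, sum_mem fun i hi => smul_mem _ _ (subset_span ⟨i, hi, rfl⟩)⟩
  refine ⟨s, fun t hst => ?_⟩
  let K := span 𝕜 (e '' t)
  have : FiniteDimensional 𝕜 K := .span_of_finite 𝕜 (t.finite_toSet.image e)
  have haK : a ∈ K := span_mono (Set.image_mono (Finset.coe_subset.mpr hst)) hs
  calc dist (∑ i ∈ t, inner 𝕜 (e i) y • e i) y
      = ‖y - K.starProjection y‖ := by
        rw [starProjection_span_image_eq_sum_inner_smul he, dist_comm, dist_eq_norm]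
    _ ≤ ‖y - a‖ := by
        rw [starProjection_minimal]
        exact ciInf_le ⟨0, Set.forall_mem_range.mpr fun _ => norm_nonneg _⟩ (⟨a, haK⟩ : K)
    _ < ε := by rwa [← dist_eq_norm]

theorem hasSum_inner_smul_preimage {U : Type*} [AddCommMonoid U] [Module 𝕜 U] [TopologicalSpace U]
    {A : U →L[𝕜] E} (hA : Function.Injective A) {e : ι → E} (he : Orthonormal 𝕜 e)
    {b : ι → U} (hb : ∀ i, A (b i) = e i) {x : U}
    (hx : A x ∈ (span 𝕜 (Set.range e)).topologicalClosure)
    (hsum : Summable fun i => inner 𝕜 (e i) (A x) • b i) :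
    HasSum (fun i => inner 𝕜 (e i) (A x) • b i) x := by
  obtain ⟨s, hs⟩ := hsum
  have hAs : HasSum (fun i => inner 𝕜 (e i) (A x) • e i) (A s) := by
    simpa only [map_smul, hb] using A.hasSum hs
  have hsx : A s = A x := hAs.unique (hasSum_inner_smul_of_mem_topologicalClosure_span he hx)
  exact hA hsx ▸ hs

end FourierSeries

section GramSchmidt

variable {𝕜 ι E : Type*} [RCLike 𝕜] [NormedAddCommGroup E] [InnerProductSpace 𝕜 E]
  [LinearOrder ι] [LocallyFiniteOrderBot ι] [WellFoundedLT ι]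

theorem gramSchmidt_mem_orthogonal_span_Iio (f : ι → E) (i : ι) :
    gramSchmidt 𝕜 f i ∈ (span 𝕜 (f '' Set.Iio i))ᗮ := by
  refine mem_orthogonal_span_iff.mpr ?_
  rintro _ ⟨j, hj, rfl⟩
  rw [inner_eq_zero_symm, gramSchmidt_inv_triangular 𝕜 f hj]

theorem sub_gramSchmidt_mem_span_Iio (f : ι → E) (i : ι) :
    f i - gramSchmidt 𝕜 f i ∈ span 𝕜 (f '' Set.Iio i) := by
  rw [gramSchmidt_def, sub_sub_cancel, ← span_gramSchmidt_Iio]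
  refine sum_mem fun j hj => ?_
  have hle : 𝕜 ∙ gramSchmidt 𝕜 f j ≤ span 𝕜 (gramSchmidt 𝕜 f '' Set.Iio i) :=
    span_mono (Set.singleton_subset_iff.mpr ⟨j, Finset.mem_Iio.mp hj, rfl⟩)
  exact hle (starProjection_apply_mem _ _)

theorem sub_eq_gramSchmidt {f : ι → E} {i : ι} {p : E} (hp : p ∈ span 𝕜 (f '' Set.Iio i))
    (hfp : f i - p ∈ (span 𝕜 (f '' Set.Iio i))ᗮ) : f i - p = gramSchmidt 𝕜 f i := by
  have hmem : f i - p - gramSchmidt 𝕜 f i ∈ span 𝕜 (f '' Set.Iio i) := by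
    rw [sub_right_comm]
    exact sub_mem (sub_gramSchmidt_mem_span_Iio f i) hp
  have horth : f i - p - gramSchmidt 𝕜 f i ∈ (span 𝕜 (f '' Set.Iio i))ᗮ :=
    sub_mem hfp (gramSchmidt_mem_orthogonal_span_Iio f i)
  exact sub_eq_zero.mp (disjoint_def.mp (orthogonal_disjoint _) _ hmem horth)

end GramSchmidt

theorem summable_smul_of_norm_le_mul_of_norm_le_div {𝕜 ι U : Type*} [NormedField 𝕜]
    [NormedAddCommGroup U] [NormedSpace 𝕜 U] [CompleteSpace U] {c : ι → 𝕜} {b : ι → U}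
    {r w : ι → ℝ} {C₁ C₂ : ℝ} (hr : ∀ i, r i ≠ 0) (hw : Summable w)
    (hc : ∀ i, ‖c i‖ ≤ C₁ * r i) (hb : ∀ i, ‖b i‖ ≤ C₂ * w i / r i) :
    Summable fun i => c i • b i := by
  refine .of_norm_bounded (hw.mul_left (C₁ * C₂)) fun i => ?_
  calc ‖c i • b i‖ = ‖c i‖ * ‖b i‖ := norm_smul _ _
    _ ≤ C₁ * r i * (C₂ * w i / r i) :=
        mul_le_mul (hc i) (hb i) (norm_nonneg _) ((norm_nonneg _).trans (hc i))
    _ = C₁ * C₂ * w i := by field_simp [hr i]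

theorem strong_convergence_of_regularisation_by_projection_general
    {𝕜 ι U Y : Type*} [RCLike 𝕜] [LinearOrder ι] [LocallyFiniteOrderBot ι] [WellFoundedLT ι]
    [NormedAddCommGroup U] [NormedSpace 𝕜 U] [CompleteSpace U]
    [NormedAddCommGroup Y] [InnerProductSpace 𝕜 Y]
    {A : U →L[𝕜] Y} (hA : Function.Injective A) {u : ι → U} (hindep : LinearIndependent 𝕜 u)
    {p : ι → Y} (hp : ∀ i, p i ∈ span 𝕜 ((fun j => A (u j)) '' Set.Iio i) ∧
      A (u i) - p i ∈ (span 𝕜 ((fun j => A (u j)) '' Set.Iio i))ᗮ)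
    {yb : ι → Y} (hyb : ∀ i, yb i = (‖A (u i) - p i‖ : 𝕜)⁻¹ • (A (u i) - p i))
    {ub : ι → U} (hub : ∀ i, A (ub i) = yb i)
    {x : U} (hx : A x ∈ (span 𝕜 (Set.range fun i => A (u i))).topologicalClosure)
    {C₁ : ℝ} (hcoeff : ∀ i, ‖inner 𝕜 (yb i) (A x)‖ ≤ C₁ * ‖A (u i) - p i‖)
    {w : ι → ℝ} (hw : Summable w)
    {C₂ : ℝ} (hub_norm : ∀ i, ‖ub i‖ ≤ C₂ * w i / ‖A (u i) - p i‖) :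
    HasSum (fun i => inner 𝕜 (yb i) (A x) • ub i) x := by
  have hAu : LinearIndependent 𝕜 fun i => A (u i) :=
    hindep.map' A.toLinearMap (LinearMap.ker_eq_bot.mpr hA)
  have hresidual (i : ι) : A (u i) - p i = gramSchmidt 𝕜 (fun j => A (u j)) i :=
    sub_eq_gramSchmidt (hp i).1 (hp i).2
  have hresidual_ne (i : ι) : ‖A (u i) - p i‖ ≠ 0 := by
    rw [hresidual, norm_ne_zero_iff]
    exact gramSchmidt_ne_zero i hAu
  obtain rfl : yb = gramSchmidtNormed 𝕜 fun j => A (u j) :=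
    funext fun i => by rw [hyb, hresidual, gramSchmidtNormed]
  rw [← span_gramSchmidt, ← span_gramSchmidtNormed_range] at hx
  exact hasSum_inner_smul_preimage hA (gramSchmidtNormed_orthonormal hAu) hub hx
    (summable_smul_of_norm_le_mul_of_norm_le_div hresidual_ne hw hcoeff hub_norm)

/-- Let `U`, `Y` be real Hilbert spaces, `A : U → Y` an injective bounded linear operator,
`(uᵢ)` a linearly independent sequence in `U`, `yᵢ = A uᵢ`,
`Uᵢ = span {u₀, …, u_{i-1}}`, `Yᵢ = span {y₀, …, y_{i-1}}` (with `U₀ = Y₀ = {0}`),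
with orthogonal projections `P i`, `Q i`.  Define the Gram–Schmidt orthonormalisation
`ȳᵢ = (yᵢ − Q i yᵢ)/‖yᵢ − Q i yᵢ‖` and let `ūᵢ ∈ U` be the unique element with
`A ūᵢ = ȳᵢ`.  Let `uex ∈ U`, `y = A uex` with `y` in the closed linear span of the `yᵢ`.
Assume (i) `|⟪y, ȳᵢ⟫| ≤ C₁ ‖yᵢ − Q i yᵢ‖` for all `i`;
(ii) `Σᵢ ‖uᵢ − P i uᵢ‖ < ∞`; and
(iii) `‖ūᵢ‖ ≤ C₂ ‖uᵢ − P i uᵢ‖ / ‖yᵢ − Q i yᵢ‖` for all `i`.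
Then the partial sums `Σ_{i<n} ⟪y, ȳᵢ⟫ ūᵢ` converge in norm to `uex`. -/
theorem strong_convergence_of_regularisation_by_projection
    {U Y : Type*} [NormedAddCommGroup U] [InnerProductSpace ℝ U] [CompleteSpace U]
    [NormedAddCommGroup Y] [InnerProductSpace ℝ Y] [CompleteSpace Y]
    (A : U →L[ℝ] Y) (hA : Function.Injective A)
    (u : ℕ → U) (hindep : LinearIndependent ℝ u)
    (P : ℕ → U →L[ℝ] U)
    (hP : ∀ i, ∀ x : U, P i x ∈ Submodule.span ℝ (u '' Set.Iio i) ∧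
      x - P i x ∈ (Submodule.span ℝ (u '' Set.Iio i))ᗮ)
    (Q : ℕ → Y →L[ℝ] Y)
    (hQ : ∀ i, ∀ z : Y, Q i z ∈ Submodule.span ℝ ((fun j => A (u j)) '' Set.Iio i) ∧
      z - Q i z ∈ (Submodule.span ℝ ((fun j => A (u j)) '' Set.Iio i))ᗮ)
    (yb : ℕ → Y)
    (hyb : ∀ i, yb i = ‖A (u i) - Q i (A (u i))‖⁻¹ • (A (u i) - Q i (A (u i))))
    (ub : ℕ → U) (hub : ∀ i, A (ub i) = yb i)
    (uex : U) (y : Y) (hy : y = A uex)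
    (hyspan : y ∈ (Submodule.span ℝ (Set.range fun i => A (u i))).topologicalClosure)
    (C₁ : ℝ) (h1 : ∀ i, |⟪y, yb i⟫| ≤ C₁ * ‖A (u i) - Q i (A (u i))‖)
    (h2 : Summable (fun i : ℕ => ‖u i - P i (u i)‖))
    (C₂ : ℝ) (h3 : ∀ i, ‖ub i‖ ≤ C₂ * ‖u i - P i (u i)‖ / ‖A (u i) - Q i (A (u i))‖) :
    Filter.Tendsto (fun n : ℕ => ∑ i ∈ Finset.range n, ⟪y, yb i⟫ • ub i)
      Filter.atTop (nhds uex) := by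
  subst hy
  simpa only [real_inner_comm] using (strong_convergence_of_regularisation_by_projection_general
    hA hindep (fun i => hQ i (A (u i))) hyb hub hyspan
    (fun i => (norm_inner_symm _ _).trans_le (h1 i)) h2 h3).tendsto_sum_nat
end

section
/- Let u† ∈ U and y = A u†. Then R u† is the minimum-norm solution of the projected equation Q(A u) = Q y; that is: Q(A(R u†)) = Q y, and for every v ∈ U with Q(A v) = Q y one has ‖R u†‖ ≤ ‖v‖, with equality only if v = R u†. -/
/-!
Since `⟪A* w, v⟫ = ⟪w, A v⟫`, the orthogonal complement of `Z = A*(Yₙ)` is the preimage of `Yₙᗮ`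
under `A`. Hence `Q (A v) = Q (A u)` says exactly that `R v = R u`: the solutions are the points
with the same projection onto `Z` as `u`. Among them `R u` itself has the least norm, as
`‖R u‖ = ‖R v‖ ≤ ‖v‖`, with equality only if `v` is fixed by `R`.
-/

section OrthogonalProjection

open Submodule
open scoped InnerProductSpace

variable {𝕜 U Y : Type*} [RCLike 𝕜]
  [NormedAddCommGroup U] [InnerProductSpace 𝕜 U] [NormedAddCommGroup Y] [InnerProductSpace 𝕜 Y]

theorem exists_coe_starProjection_eq {K : Submodule 𝕜 U} {P : U → U}
    (hP : ∀ x, P x ∈ K ∧ x - P x ∈ Kᗮ) :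
    ∃ _ : K.HasOrthogonalProjection, K.starProjection = P := by
  have : K.HasOrthogonalProjection := ⟨fun x => ⟨P x, hP x⟩⟩
  exact ⟨this, funext fun x => eq_starProjection_of_mem_orthogonal (hP x).1 (hP x).2⟩

theorem starProjection_eq_starProjection_iff {K : Submodule 𝕜 U} [K.HasOrthogonalProjection]
    {x y : U} : K.starProjection x = K.starProjection y ↔ x - y ∈ Kᗮ := by
  rw [← sub_eq_zero, ← map_sub, starProjection_apply_eq_zero_iff]

variable {A : U →ₗ[𝕜] Y} {B : Y →ₗ[𝕜] U}

theorem orthogonal_map_eq_comap_orthogonal (hAB : ∀ u w, ⟪B w, u⟫_𝕜 = ⟪w, A u⟫_𝕜)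
    (K : Submodule 𝕜 Y) : (K.map B)ᗮ = Kᗮ.comap A := by
  ext u
  simp only [mem_orthogonal, mem_comap, mem_map, forall_exists_index, and_imp,
    forall_apply_eq_imp_iff₂, hAB]

theorem starProjection_apply_eq_iff_starProjection_map_eq
    (hAB : ∀ u w, ⟪B w, u⟫_𝕜 = ⟪w, A u⟫_𝕜) (K : Submodule 𝕜 Y) [K.HasOrthogonalProjection]
    [(K.map B).HasOrthogonalProjection] {v u : U} :
    K.starProjection (A v) = K.starProjection (A u) ↔
      (K.map B).starProjection v = (K.map B).starProjection u := by
  rw [starProjection_eq_starProjection_iff, starProjection_eq_starProjection_iff,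
    orthogonal_map_eq_comap_orthogonal hAB, mem_comap, map_sub]

theorem dual_least_squares_minimum_norm_solution_general
    (hAB : ∀ u w, ⟪B w, u⟫_𝕜 = ⟪w, A u⟫_𝕜) {K : Submodule 𝕜 Y}
    {Q : Y → Y} (hQ : ∀ z, Q z ∈ K ∧ z - Q z ∈ Kᗮ)
    {R : U → U} (hR : ∀ x, R x ∈ K.map B ∧ x - R x ∈ (K.map B)ᗮ) (u : U) :
    Q (A (R u)) = Q (A u) ∧
    ∀ v : U, Q (A v) = Q (A u) → ‖R u‖ ≤ ‖v‖ ∧ (‖v‖ = ‖R u‖ → v = R u) := by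
  obtain ⟨_, rfl⟩ := exists_coe_starProjection_eq hQ
  obtain ⟨_, rfl⟩ := exists_coe_starProjection_eq hR
  simp only [starProjection_apply_eq_iff_starProjection_map_eq hAB]
  refine ⟨starProjection_eq_self_iff.mpr (starProjection_apply_mem _ u), fun v hv => ?_⟩
  rw [← hv]
  refine ⟨norm_starProjection_apply_le _ v, fun hnorm => ?_⟩
  have hmem : v ∈ K.map B := (mem_iff_norm_starProjection _ v).mpr hnorm.symm
  exact (starProjection_eq_self_iff.mpr hmem).symm

end OrthogonalProjection

/-- Let `U`, `Y` be real Hilbert spaces, `A : U → Y` an injective bounded linear operator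
with adjoint `A*`, `Yₙ` a finite-dimensional subspace of `Y` with orthogonal
projection `Q`, and `Z = A*(Yₙ)` with orthogonal projection `R`.  Let `uex ∈ U` and
`y = A uex`.  Then `R uex` is the minimum-norm solution of `Q (A u) = Q y`:
`Q (A (R uex)) = Q y`, and for every `v` with `Q (A v) = Q y` one has
`‖R uex‖ ≤ ‖v‖`, with equality only if `v = R uex`. -/
theorem dual_least_squares_minimum_norm_solution
    {U Y : Type*} [NormedAddCommGroup U] [InnerProductSpace ℝ U] [CompleteSpace U]
    [NormedAddCommGroup Y] [InnerProductSpace ℝ Y] [CompleteSpace Y]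
    (A : U →L[ℝ] Y) (hA : Function.Injective A)
    (Yn : Submodule ℝ Y) (hYn : FiniteDimensional ℝ Yn)
    (Q : Y →L[ℝ] Y)
    (hQ : ∀ z : Y, Q z ∈ Yn ∧ z - Q z ∈ Ynᗮ)
    (R : U →L[ℝ] U)
    (hR : ∀ x : U,
      R x ∈ Yn.map ((ContinuousLinearMap.adjoint A : Y →L[ℝ] U) : Y →ₗ[ℝ] U) ∧
      x - R x ∈ (Yn.map ((ContinuousLinearMap.adjoint A : Y →L[ℝ] U) : Y →ₗ[ℝ] U))ᗮ)
    (uex : U) (y : Y) (hy : y = A uex) :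
    Q (A (R uex)) = Q y ∧
    ∀ v : U, Q (A v) = Q y →
      ‖R uex‖ ≤ ‖v‖ ∧ (‖v‖ = ‖R uex‖ → v = R uex) := by
  subst hy
  exact dual_least_squares_minimum_norm_solution_general A.adjoint_inner_left hQ hR uex
end

section
/- Let ŷ^i := A e^i and Y_n := span{ŷ^1, ..., ŷ^n}. For every n ≥ 1 and every i ≥ n+1, if the orthogonal projection of ŷ^i onto Y_n is written as P_{Y_n} ŷ^i = Σ_{k=1}^n γ_k ŷ^k, then Σ_{k=1}^n γ_k² ≤ 1. -/
/-- The coefficients `aᵢ` of Seidman's example: `aᵢ = i⁻¹` for odd `i`,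
`aᵢ = i^{-5/2}` for even `i`. -/
noncomputable def seidmanA (i : ℕ+) : ℝ :=
  if Odd (i : ℕ) then ((i : ℕ) : ℝ)⁻¹ else ((i : ℕ) : ℝ) ^ (-(5 / 2) : ℝ)

/-- The coefficients `bᵢ` of Seidman's example: `b₁ = 0`, `bᵢ = i⁻¹` for `i ≥ 2`. -/
noncomputable def seidmanB (i : ℕ+) : ℝ :=
  if i = 1 then 0 else ((i : ℕ) : ℝ)⁻¹

/-!
Let `p = ∑ γₖ ŷₖ` be the projection of `ŷᵢ`. Only `ŷ₁` is not a multiple of a basis vector, so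
orthogonality of `ŷᵢ - p` to `ŷₖ` for `2 ≤ k ≤ n` says `aₖ γₖ = -bₖ γ₁`, while orthogonality to `p`
itself gives `‖p‖² = ⟪p, ŷᵢ⟫ = aᵢ bᵢ γ₁`. Since `p` has first coordinate `γ₁`, the latter yields
`|γ₁| ≤ aᵢ bᵢ ≤ i⁻²`; the former yields `γₖ² ≤ k³ γ₁²`. Summing over `k ≤ n < i`,
`∑ γₖ² ≤ n⁴ γ₁² ≤ (n / i)⁴ ≤ 1`.
-/

section NormalEquations

variable {κ 𝕜 E : Type*} [RCLike 𝕜] [NormedAddCommGroup E] [InnerProductSpace 𝕜 E]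
  {y : κ → E} {s : Finset κ} {v : E} {γ : κ → 𝕜}

/-- The normal equations of the least squares problem `∑ k ∈ s, γ k • y k ≈ v`, which say that this
sum is the orthogonal projection of `v` onto the span of the `y k`, `k ∈ s`. They do not presuppose
that the `y k` are linearly independent. -/
def SatisfiesNormalEquations (y : κ → E) (s : Finset κ) (v : E) (γ : κ → 𝕜) : Prop :=
  ∀ j ∈ s, inner 𝕜 (y j) (v - ∑ k ∈ s, γ k • y k) = 0

namespace SatisfiesNormalEquations

theorem of_sub_mem_orthogonal_span
    (h : v - ∑ k ∈ s, γ k • y k ∈ (Submodule.span 𝕜 (y '' s))ᗮ) :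
    SatisfiesNormalEquations y s v γ := fun j hj =>
  h (y j) (Submodule.subset_span (Set.mem_image_of_mem y hj))

theorem inner_sum_self (h : SatisfiesNormalEquations y s v γ) :
    inner 𝕜 (∑ k ∈ s, γ k • y k) (∑ k ∈ s, γ k • y k) = inner 𝕜 (∑ k ∈ s, γ k • y k) v := by
  have orthogonal : inner 𝕜 (∑ k ∈ s, γ k • y k) (v - ∑ k ∈ s, γ k • y k) = 0 := by
    rw [sum_inner]
    exact Finset.sum_eq_zero fun j hj => by rw [inner_smul_left, h j hj, mul_zero]
  rwa [inner_sub_right, sub_eq_zero, eq_comm] at orthogonal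

end SatisfiesNormalEquations

end NormalEquations

section DiagonalAddColumn

variable {ι 𝕜 : Type*} [RCLike 𝕜]

/-- `A` acts on `ℓ²(ι)` as the matrix with diagonal `a` plus the matrix whose only nonzero column,
at index `o`, is `b`. -/
def IsDiagonalAddColumn (a b : ι → 𝕜) (o : ι)
    (A : lp (fun _ : ι => 𝕜) 2 → lp (fun _ : ι => 𝕜) 2) : Prop :=
  ∀ ξ i, A ξ i = a i * ξ i + b i * ξ o

namespace IsDiagonalAddColumn

variable [DecidableEq ι] {a b : ι → 𝕜} {o i k : ι} {s : Finset ι} {γ : ι → 𝕜}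
  {A : lp (fun _ : ι => 𝕜) 2 → lp (fun _ : ι => 𝕜) 2}

theorem apply_single_of_ne (hA : IsDiagonalAddColumn a b o A) (hk : k ≠ o) :
    A (lp.single 2 k 1) = lp.single 2 k (a k) := by
  ext j
  rw [hA]
  by_cases hj : j = k
  · subst hj
    simp [hk.symm]
  · simp [hj, hk.symm]

theorem sum_smul_apply_single (hA : IsDiagonalAddColumn a b o A) (ho : o ∈ s) (γ : ι → 𝕜) (j : ι) :
    (∑ k ∈ s, γ k • A (lp.single 2 k 1)) j = a j * (if j ∈ s then γ j else 0) + b j * γ o := by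
  rw [lp.coeFn_sum, Finset.sum_apply]
  simp [hA _ _, mul_add, Finset.sum_add_distrib, ho, lp.single_apply, Pi.single_apply, mul_comm]

theorem diagonal_mul_coeff_eq_neg (hA : IsDiagonalAddColumn a b o A) (ho : o ∈ s) (hi : i ∉ s)
    (hγ : SatisfiesNormalEquations (fun k => A (lp.single 2 k 1)) s (A (lp.single 2 i 1)) γ)
    (hk : k ∈ s) (hko : k ≠ o) (hak : a k ≠ 0) : a k * γ k = -(b k * γ o) := by
  have hio : i ≠ o := fun h => hi (h ▸ ho)
  have hki : k ≠ i := fun h => hi (h ▸ hk)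
  have orthogonal := hγ k hk
  beta_reduce at orthogonal
  rw [hA.apply_single_of_ne hko, hA.apply_single_of_ne hio, lp.inner_single_left, lp.coeFn_sub,
    Pi.sub_apply, hA.sum_smul_apply_single ho, if_pos hk, lp.single_apply_ne _ _ _ hki, zero_sub,
    RCLike.inner_apply, mul_eq_zero, neg_eq_zero] at orthogonal
  exact eq_neg_of_add_eq_zero_left (orthogonal.resolve_right (star_ne_zero.2 hak))

theorem norm_sq_mul_norm_coeff_le (hA : IsDiagonalAddColumn a b o A) (ho : o ∈ s) (hi : i ∉ s)
    (hγ : SatisfiesNormalEquations (fun k => A (lp.single 2 k 1)) s (A (lp.single 2 i 1)) γ) :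
    ‖a o + b o‖ ^ 2 * ‖γ o‖ ≤ ‖a i‖ * ‖b i‖ := by
  have hio : i ≠ o := fun h => hi (h ▸ ho)
  set p := ∑ k ∈ s, γ k • A (lp.single 2 k 1) with hp
  have coord_o : p o = (a o + b o) * γ o := by
    rw [hp, hA.sum_smul_apply_single ho, if_pos ho, add_mul]
  have coord_i : p i = b i * γ o := by
    rw [hp, hA.sum_smul_apply_single ho, if_neg hi, mul_zero, zero_add]
  have norm_sq_p : ‖p‖ ^ 2 = ‖a i‖ * ‖b i‖ * ‖γ o‖ :=
    calc ‖p‖ ^ 2 = ‖inner 𝕜 p p‖ := by simp [inner_self_eq_norm_sq_to_K]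
      _ = ‖inner 𝕜 p (lp.single 2 i (a i))‖ := by
        rw [hγ.inner_sum_self, hA.apply_single_of_ne hio]
      _ = ‖a i‖ * ‖b i‖ * ‖γ o‖ := by
        rw [lp.inner_single_right, coord_i, RCLike.inner_apply, norm_mul, RCLike.norm_conj,
          norm_mul, mul_assoc]
  rcases (norm_nonneg (γ o)).eq_or_lt with hzero | hpos
  · rw [← hzero, mul_zero]
    positivity
  · refine le_of_mul_le_mul_right ?_ hpos
    calc ‖a o + b o‖ ^ 2 * ‖γ o‖ * ‖γ o‖ = ‖p o‖ ^ 2 := by rw [coord_o, norm_mul]; ring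
      _ ≤ ‖p‖ ^ 2 := by gcongr; exact lp.norm_apply_le_norm two_ne_zero p o
      _ = ‖a i‖ * ‖b i‖ * ‖γ o‖ := norm_sq_p

end IsDiagonalAddColumn

end DiagonalAddColumn

theorem seidmanA_le_inv (i : ℕ+) : seidmanA i ≤ (i : ℝ)⁻¹ := by
  have one_le : (1 : ℝ) ≤ i := mod_cast i.pos
  unfold seidmanA
  split_ifs
  · exact le_rfl
  · rw [← Real.rpow_neg_one]
    exact Real.rpow_le_rpow_of_exponent_le one_le (by norm_num)

theorem rpow_le_seidmanA (i : ℕ+) : (i : ℝ) ^ (-(5 / 2) : ℝ) ≤ seidmanA i := by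
  have one_le : (1 : ℝ) ≤ i := mod_cast i.pos
  unfold seidmanA
  split_ifs
  · rw [← Real.rpow_neg_one]
    exact Real.rpow_le_rpow_of_exponent_le one_le (by norm_num)
  · exact le_rfl

theorem seidmanA_pos (i : ℕ+) : 0 < seidmanA i :=
  (Real.rpow_pos_of_pos (mod_cast i.pos) _).trans_le (rpow_le_seidmanA i)

theorem seidmanB_nonneg (i : ℕ+) : 0 ≤ seidmanB i := by
  unfold seidmanB
  positivity

theorem seidmanB_le_inv (i : ℕ+) : seidmanB i ≤ (i : ℝ)⁻¹ := by
  unfold seidmanB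
  split_ifs
  · positivity
  · exact le_rfl

theorem seidmanA_one_add_seidmanB_one : seidmanA 1 + seidmanB 1 = 1 := by
  simp [seidmanA, seidmanB]

theorem seidmanA_mul_seidmanB_le (i : ℕ+) : seidmanA i * seidmanB i ≤ ((i : ℝ) ^ 2)⁻¹ :=
  calc seidmanA i * seidmanB i ≤ (i : ℝ)⁻¹ * (i : ℝ)⁻¹ :=
        mul_le_mul (seidmanA_le_inv i) (seidmanB_le_inv i) (seidmanB_nonneg i) (by positivity)
    _ = ((i : ℝ) ^ 2)⁻¹ := by rw [sq, mul_inv]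

theorem seidmanB_sq_le (i : ℕ+) : seidmanB i ^ 2 ≤ (i : ℝ) ^ 3 * seidmanA i ^ 2 := by
  have pos : (0 : ℝ) < i := mod_cast i.pos
  have rpow_sq : ((i : ℝ) ^ (-(5 / 2) : ℝ)) ^ 2 = ((i : ℝ) ^ 5)⁻¹ := by
    rw [← Real.rpow_natCast, ← Real.rpow_mul pos.le, ← Real.rpow_natCast, ← Real.rpow_neg pos.le]
    norm_num
  calc seidmanB i ^ 2 ≤ ((i : ℝ)⁻¹) ^ 2 :=
        pow_le_pow_left₀ (seidmanB_nonneg i) (seidmanB_le_inv i) 2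
    _ = (i : ℝ) ^ 3 * ((i : ℝ) ^ (-(5 / 2) : ℝ)) ^ 2 := by rw [rpow_sq]; field_simp
    _ ≤ (i : ℝ) ^ 3 * seidmanA i ^ 2 := by gcongr; exact rpow_le_seidmanA i

section SeidmanProjection

variable {A : lp (fun _ : ℕ+ => ℝ) 2 → lp (fun _ : ℕ+ => ℝ) 2} {s : Finset ℕ+} {i k : ℕ+}
  {γ : ℕ+ → ℝ}

theorem seidman_abs_coeff_one_le (hA : IsDiagonalAddColumn seidmanA seidmanB 1 A)
    (hs : 1 ∈ s) (hi : i ∉ s)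
    (hγ : SatisfiesNormalEquations (fun k => A (lp.single 2 k 1)) s (A (lp.single 2 i 1)) γ) :
    |γ 1| ≤ ((i : ℝ) ^ 2)⁻¹ := by
  have coeff_le := hA.norm_sq_mul_norm_coeff_le hs hi hγ
  rw [seidmanA_one_add_seidmanB_one, norm_one, one_pow, one_mul, Real.norm_eq_abs,
    Real.norm_of_nonneg (seidmanA_pos i).le, Real.norm_of_nonneg (seidmanB_nonneg i)] at coeff_le
  exact coeff_le.trans (seidmanA_mul_seidmanB_le i)

theorem seidman_coeff_sq_le (hA : IsDiagonalAddColumn seidmanA seidmanB 1 A)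
    (hs : 1 ∈ s) (hi : i ∉ s)
    (hγ : SatisfiesNormalEquations (fun k => A (lp.single 2 k 1)) s (A (lp.single 2 i 1)) γ)
    (hk : k ∈ s) : γ k ^ 2 ≤ (k : ℝ) ^ 3 * γ 1 ^ 2 := by
  rcases eq_or_ne k 1 with rfl | hk1
  · simp
  have relation := hA.diagonal_mul_coeff_eq_neg hs hi hγ hk hk1 (seidmanA_pos k).ne'
  refine le_of_mul_le_mul_left ?_ (pow_pos (seidmanA_pos k) 2)
  calc seidmanA k ^ 2 * γ k ^ 2 = seidmanB k ^ 2 * γ 1 ^ 2 := by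
        rw [← mul_pow, relation, neg_sq, mul_pow]
    _ ≤ (k : ℝ) ^ 3 * seidmanA k ^ 2 * γ 1 ^ 2 := by gcongr; exact seidmanB_sq_le k
    _ = seidmanA k ^ 2 * ((k : ℝ) ^ 3 * γ 1 ^ 2) := by ring

theorem seidman_sum_coeff_sq_le {n : ℕ+} (hA : IsDiagonalAddColumn seidmanA seidmanB 1 A)
    (hi : n < i) (hγ : SatisfiesNormalEquations (fun k => A (lp.single 2 k 1)) (Finset.Icc 1 n)
      (A (lp.single 2 i 1)) γ) :
    ∑ k ∈ Finset.Icc 1 n, γ k ^ 2 ≤ ((n : ℝ) ^ 2 * |γ 1|) ^ 2 := by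
  have coeff_sq_le : ∀ k ∈ Finset.Icc 1 n, γ k ^ 2 ≤ (n : ℝ) ^ 3 * γ 1 ^ 2 := fun k hk => by
    have hkn : (k : ℝ) ≤ n := mod_cast (Finset.mem_Icc.1 hk).2
    calc γ k ^ 2 ≤ (k : ℝ) ^ 3 * γ 1 ^ 2 :=
          seidman_coeff_sq_le hA (by simp) (by simp [hi]) hγ hk
      _ ≤ (n : ℝ) ^ 3 * γ 1 ^ 2 := by gcongr
  calc ∑ k ∈ Finset.Icc 1 n, γ k ^ 2
      ≤ (Finset.Icc 1 n).card • ((n : ℝ) ^ 3 * γ 1 ^ 2) :=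
        Finset.sum_le_card_nsmul _ _ _ coeff_sq_le
    _ = n * ((n : ℝ) ^ 3 * γ 1 ^ 2) := by simp
    _ = ((n : ℝ) ^ 2 * |γ 1|) ^ 2 := by rw [mul_pow, sq_abs]; ring

end SeidmanProjection

/-- Let `A : ℓ² → ℓ²` be the bounded linear operator of Seidman's example,
`(A ξ)ᵢ = aᵢ ξᵢ + bᵢ ξ₁`, let `(eᵢ)` be the standard orthonormal basis of `ℓ²`,
`ŷᵢ = A eᵢ` and `Yₙ = span {ŷ₁, …, ŷₙ}`.  For every `n ≥ 1` and every `i ≥ n + 1`,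
if the orthogonal projection of `ŷᵢ` onto `Yₙ` is written
`Q ŷᵢ = Σ_{k=1}^n γₖ ŷₖ`, then `Σ_{k=1}^n γₖ² ≤ 1`. -/
theorem seidman_projection_coefficients_bound
    (A : lp (fun _ : ℕ+ => ℝ) 2 →L[ℝ] lp (fun _ : ℕ+ => ℝ) 2)
    (hA : ∀ ξ : lp (fun _ : ℕ+ => ℝ) 2, ∀ i : ℕ+,
      (A ξ) i = seidmanA i * ξ i + seidmanB i * ξ 1)
    (e : ℕ+ → lp (fun _ : ℕ+ => ℝ) 2) (he : ∀ i, e i = lp.single 2 i 1)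
    (n i : ℕ+) (hi : n < i)
    (Q : lp (fun _ : ℕ+ => ℝ) 2 →L[ℝ] lp (fun _ : ℕ+ => ℝ) 2)
    (hQ : ∀ v, Q v ∈ Submodule.span ℝ ((fun j => A (e j)) '' Set.Iic n) ∧
      v - Q v ∈ (Submodule.span ℝ ((fun j => A (e j)) '' Set.Iic n))ᗮ)
    (γ : ℕ+ → ℝ)
    (hγ : Q (A (e i)) = ∑ k ∈ Finset.Icc 1 n, γ k • A (e k)) :
    ∑ k ∈ Finset.Icc 1 n, γ k ^ 2 ≤ 1 := by
  obtain rfl : e = fun k => lp.single 2 k 1 := funext he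
  have hi_notMem : i ∉ Finset.Icc 1 n := by simp [hi]
  have one_mem : 1 ∈ Finset.Icc 1 n := by simp
  have normal : SatisfiesNormalEquations (fun k => A (lp.single 2 k 1)) (Finset.Icc 1 n)
      (A (lp.single 2 i 1)) γ := by
    refine .of_sub_mem_orthogonal_span ?_
    rw [← hγ, Finset.coe_Icc, ← PNat.bot_eq_one, Set.Icc_bot]
    exact (hQ _).2
  have hni : (n : ℝ) ≤ i := mod_cast hi.le
  calc ∑ k ∈ Finset.Icc 1 n, γ k ^ 2
      ≤ ((n : ℝ) ^ 2 * |γ 1|) ^ 2 := seidman_sum_coeff_sq_le hA hi normal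
    _ ≤ ((i : ℝ) ^ 2 * ((i : ℝ) ^ 2)⁻¹) ^ 2 := by
        gcongr
        exact seidman_abs_coeff_one_le hA one_mem hi_notMem normal
    _ = 1 := by rw [mul_inv_cancel₀ (by positivity), one_pow]
end

section
/- If u ∈ ℓ² lies in the range of the adjoint A*, i.e. u = A* v for some v ∈ ℓ², then the coefficients of u in the standard basis are absolutely summable: Σ_{i=1}^∞ |⟨u, e^i⟩| < ∞. -/
open scoped RealInnerProductSpace

/-!
The term `bᵢ ξ₁` only affects the action of `A` on `e¹`, so `A eⁱ = aᵢ eⁱ` for every `i ≠ 1`, and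
the coefficients of `A* v` are `aᵢ vᵢ` with one exception. Since `|aᵢ| ≤ i⁻¹` is square-summable,
the Cauchy–Schwarz inequality makes them absolutely summable.
-/

section HilbertSpace

variable {ι 𝕜 E F : Type*} [RCLike 𝕜]
  [NormedAddCommGroup E] [InnerProductSpace 𝕜 E] [NormedAddCommGroup F] [InnerProductSpace 𝕜 F]

theorem memℓp_two_inner_of_orthonormal {f : ι → F} (hf : Orthonormal 𝕜 f) (y : F) :
    Memℓp (fun i => inner 𝕜 (f i) y) 2 :=
  memℓp_gen <| by simpa using hf.inner_products_summable (x := y)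

theorem summable_norm_inner_adjoint_of_eventually_apply_eq_smul [CompleteSpace E] [CompleteSpace F]
    {T : E →L[𝕜] F} {e : ι → E} {f : ι → F} {a : ι → 𝕜} (hf : Orthonormal 𝕜 f) (ha : Memℓp a 2)
    (hT : ∀ᶠ i in Filter.cofinite, T (e i) = a i • f i) (y : F) :
    Summable fun i => ‖inner 𝕜 (T.adjoint y) (e i)‖ := by
  have hay : Summable fun i => ‖a i‖ * ‖inner 𝕜 (f i) y‖ :=
    lp.summable_mul (by simpa using Real.HolderConjugate.two_two)
      ⟨a, ha⟩ ⟨_, memℓp_two_inner_of_orthonormal hf y⟩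
  refine (summable_congr_cofinite ?_).mpr hay
  filter_upwards [hT] with i hi
  rw [ContinuousLinearMap.adjoint_inner_left, hi, inner_smul_right, norm_mul, norm_inner_symm]

end HilbertSpace

section SequenceSpace

variable {ι : Type*} [DecidableEq ι]

theorem apply_lp_single_eq_smul_of_ne {R : Type*} [NormedRing R] {p : ENNReal}
    {a b : ι → R} {k i : ι} {A : lp (fun _ : ι => R) p → lp (fun _ : ι => R) p}
    (hA : ∀ ξ i, A ξ i = a i * ξ i + b i * ξ k) (hi : i ≠ k) :
    A (lp.single p i 1) = a i • lp.single p i 1 := by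
  ext j
  obtain rfl | hj := eq_or_ne j i
  · simp [hA, Pi.single_eq_of_ne hi.symm]
  · simp [hA, Pi.single_eq_of_ne hi.symm, Pi.single_eq_of_ne hj]

variable {𝕜 : Type*} [RCLike 𝕜]

theorem orthonormal_lp_single :
    Orthonormal 𝕜 fun i : ι => (lp.single 2 i 1 : lp (fun _ : ι => 𝕜) 2) := by
  simp [orthonormal_iff_ite, lp.inner_single_left, Pi.single_apply]

theorem seidman_source_condition_implies_l1_general {a b : ι → 𝕜} {k : ι} (ha : Memℓp a 2)
    (A : lp (fun _ : ι => 𝕜) 2 →L[𝕜] lp (fun _ : ι => 𝕜) 2)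
    (hA : ∀ ξ i, A ξ i = a i * ξ i + b i * ξ k) (v : lp (fun _ : ι => 𝕜) 2) :
    Summable fun i => ‖inner 𝕜 (A.adjoint v) (lp.single 2 i 1)‖ := by
  refine summable_norm_inner_adjoint_of_eventually_apply_eq_smul orthonormal_lp_single ha ?_ v
  filter_upwards [(Set.finite_singleton k).compl_mem_cofinite] with i hi
  exact apply_lp_single_eq_smul_of_ne hA hi

end SequenceSpace

theorem norm_seidmanA_le_inv (i : ℕ+) : ‖seidmanA i‖ ≤ ((i : ℕ) : ℝ)⁻¹ := by
  have one_le_i : (1 : ℝ) ≤ (i : ℕ) := Nat.one_le_cast.mpr i.pos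
  unfold seidmanA
  split_ifs
  · rw [Real.norm_of_nonneg (by positivity)]
  · rw [Real.norm_of_nonneg (by positivity), ← Real.rpow_neg_one]
    exact Real.rpow_le_rpow_of_exponent_le one_le_i (by norm_num)

theorem memℓp_two_pnat_inv : Memℓp (fun i : ℕ+ => ((i : ℕ) : ℝ)⁻¹) 2 := by
  have summable_inv_sq : Summable fun n : ℕ => ((n : ℝ) ^ 2)⁻¹ :=
    Real.summable_nat_pow_inv.mpr one_lt_two
  exact memℓp_gen <| by
    simpa [Function.comp_def] using summable_inv_sq.comp_injective PNat.coe_injective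

theorem memℓp_two_seidmanA : Memℓp seidmanA 2 :=
  memℓp_two_pnat_inv.mono norm_seidmanA_le_inv

/-- Let `A : ℓ² → ℓ²` be the bounded linear operator of Seidman's example,
`(A ξ)ᵢ = aᵢ ξᵢ + bᵢ ξ₁`, let `(eᵢ)` be the standard orthonormal basis of `ℓ²` and
`A*` the Hilbert-space adjoint of `A`.  If `u ∈ ℓ²` lies in the range of `A*`, i.e.
`u = A* v` for some `v`, then `Σᵢ |⟪u, eᵢ⟫| < ∞`. -/
theorem seidman_source_condition_implies_l1
    (A : lp (fun _ : ℕ+ => ℝ) 2 →L[ℝ] lp (fun _ : ℕ+ => ℝ) 2)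
    (hA : ∀ ξ : lp (fun _ : ℕ+ => ℝ) 2, ∀ i : ℕ+,
      (A ξ) i = seidmanA i * ξ i + seidmanB i * ξ 1)
    (e : ℕ+ → lp (fun _ : ℕ+ => ℝ) 2) (he : ∀ i, e i = lp.single 2 i 1)
    (u v : lp (fun _ : ℕ+ => ℝ) 2)
    (huv : u = ContinuousLinearMap.adjoint A v) :
    Summable (fun i : ℕ+ => |⟪u, e i⟫|) := by
  obtain rfl : e = fun i => lp.single 2 i 1 := funext he
  exact huv ▸ seidman_source_condition_implies_l1_general memℓp_two_seidmanA A hA v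
end

section
/- Let α > 0, δ ≥ 0, C ≥ 0, q ∈ Y, u†, u_r ∈ U and y^δ ∈ Y. Assume: (i) ‖A u† − y^δ‖ ≤ δ; (ii) the source condition holds in the form J(u) ≥ J(u†) + ⟨q, A u − A u†⟩ for all u ∈ U (i.e. A*q is a subgradient of J at u†); (iii) u_r is a minimiser of the projected Tikhonov functional, i.e. (1/2)‖A(P u_r) − y^δ‖² + α J(u_r) ≤ (1/2)‖A(P u) − y^δ‖² + α J(u) for all u ∈ U; and (iv) ‖u_r‖ ≤ C. Then the Bregman distance D := J(u_r) − J(u†) − ⟨q, A u_r − A u†⟩ satisfies D ≤ (1/(2α)) (δ + ‖A‖·‖u† − P u†‖)² + (α/2)‖q‖² + δ‖q‖ + C·‖A*q − P(A*q)‖. -/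
open scoped RealInnerProductSpace

/-!
Comparing the Tikhonov functional at `ur` and `uex` bounds `J ur - J uex` by the difference of
the squared projected residuals over `2α`. Splitting
`A ur - A uex = (A ur - A (P ur)) + (A (P ur) - yδ) + (yδ - A uex)`, the part of the Bregman
distance involving `A (P ur) - yδ` is absorbed, up to `(α / 2) ‖q‖²`, by the residual at `ur`
via Young's inequality; the last part is noise, and moving `A` and `1 - P` to the other side of
the inner product turns the first into the approximation error of `A* q`.
-/

section Tikhonov

variable {U Y : Type*} [NormedAddCommGroup Y]

/-- The Tikhonov functional with forward map `G`, data `y`, regularisation parameter `α` and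
penalty `J`. The forward map is an arbitrary function, so that it can be `A` precomposed with a
projection, `u ↦ A (P u)`. -/
noncomputable def tikhonovFunctional (G : U → Y) (y : Y) (α : ℝ) (J : U → ℝ) (u : U) : ℝ :=
  (1 / 2) * ‖G u - y‖ ^ 2 + α * J u

theorem sub_le_of_tikhonovFunctional_le {G : U → Y} {y : Y} {α : ℝ} {J : U → ℝ} {u v : U}
    (hα : 0 < α) (h : tikhonovFunctional G y α J u ≤ tikhonovFunctional G y α J v) :
    J u - J v ≤ (1 / (2 * α)) * ‖G v - y‖ ^ 2 - (1 / (2 * α)) * ‖G u - y‖ ^ 2 := by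
  unfold tikhonovFunctional at h
  rw [← mul_sub, one_div_mul_eq_div, le_div_iff₀ (by positivity)]
  linarith

variable [InnerProductSpace ℝ Y]

theorem neg_inner_le_sq_norm_add_sq_norm {α : ℝ} (hα : 0 < α) (q r : Y) :
    -⟪q, r⟫ ≤ (1 / (2 * α)) * ‖r‖ ^ 2 + (α / 2) * ‖q‖ ^ 2 := by
  have young : 2 * ‖q‖ * ‖r‖ ≤ α * ‖q‖ ^ 2 + α⁻¹ * ‖r‖ ^ 2 := two_mul_le_add_mul_sq hα
  calc -⟪q, r⟫ ≤ ‖q‖ * ‖r‖ := (neg_le_abs _).trans (abs_real_inner_le_norm q r)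
    _ ≤ (α * ‖q‖ ^ 2 + α⁻¹ * ‖r‖ ^ 2) / 2 := by linarith
    _ = (1 / (2 * α)) * ‖r‖ ^ 2 + (α / 2) * ‖q‖ ^ 2 := by ring

theorem bregman_distance_le_of_tikhonovFunctional_le {F G : U → Y} {y : Y} {α : ℝ} {J : U → ℝ}
    {u v : U} (hα : 0 < α) (h : tikhonovFunctional G y α J u ≤ tikhonovFunctional G y α J v)
    (q : Y) :
    J u - J v - ⟪q, F u - F v⟫
      ≤ (1 / (2 * α)) * ‖G v - y‖ ^ 2 + (α / 2) * ‖q‖ ^ 2 + ‖F v - y‖ * ‖q‖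
        - ⟪q, F u - G u⟫ := by
  have split : ⟪q, F u - F v⟫ = ⟪q, F u - G u⟫ + ⟪q, G u - y⟫ - ⟪q, F v - y⟫ := by
    rw [← inner_add_right, ← inner_sub_right, sub_add_sub_cancel, sub_sub_sub_cancel_right]
  have noise : ⟪q, F v - y⟫ ≤ ‖q‖ * ‖F v - y‖ := real_inner_le_norm q (F v - y)
  have residual := neg_inner_le_sq_norm_add_sq_norm hα q (G u - y)
  have penalty := sub_le_of_tikhonovFunctional_le hα h
  linarith

end Tikhonov

theorem norm_apply_sub_le_add_opNorm_mul {𝕜 U Y : Type*} [NontriviallyNormedField 𝕜]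
    [SeminormedAddCommGroup U] [NormedSpace 𝕜 U] [SeminormedAddCommGroup Y] [NormedSpace 𝕜 Y]
    (A : U →L[𝕜] Y) (u v : U) (y : Y) :
    ‖A v - y‖ ≤ ‖A u - y‖ + ‖A‖ * ‖u - v‖ :=
  calc ‖A v - y‖ = ‖(A u - y) - A (u - v)‖ := by rw [map_sub, sub_sub_sub_cancel_left]
    _ ≤ ‖A u - y‖ + ‖A (u - v)‖ := norm_sub_le _ _
    _ ≤ ‖A u - y‖ + ‖A‖ * ‖u - v‖ := by gcongr; exact A.le_opNorm _

section Adjoint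

open ContinuousLinearMap (adjoint adjoint_inner_left)

variable {U Y : Type*} [NormedAddCommGroup U] [InnerProductSpace ℝ U] [CompleteSpace U]
  [NormedAddCommGroup Y] [InnerProductSpace ℝ Y] [CompleteSpace Y]

theorem neg_inner_apply_sub_le_norm_mul_norm_adjoint_sub (A : U →L[ℝ] Y) (P : U →L[ℝ] U)
    (q : Y) (u : U) :
    -⟪q, A u - A (P u)⟫ ≤ ‖u‖ * ‖adjoint A q - adjoint P (adjoint A q)‖ :=
  calc -⟪q, A u - A (P u)⟫ = -⟪adjoint A q - adjoint P (adjoint A q), u⟫ := by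
        simp only [inner_sub_left, inner_sub_right, adjoint_inner_left]
    _ ≤ ‖adjoint A q - adjoint P (adjoint A q)‖ * ‖u‖ :=
        (neg_le_abs _).trans (abs_real_inner_le_norm _ _)
    _ = ‖u‖ * ‖adjoint A q - adjoint P (adjoint A q)‖ := mul_comm _ _

theorem bregman_distance_estimate_projected_variational_general
    (A : U →L[ℝ] Y) (P : U →L[ℝ] U) (J : U → ℝ) {α δ C : ℝ} (hα : 0 < α)
    (q : Y) {uex ur : U} {yδ : Y} (hnoise : ‖A uex - yδ‖ ≤ δ)
    (hle : tikhonovFunctional (fun u ↦ A (P u)) yδ α J ur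
      ≤ tikhonovFunctional (fun u ↦ A (P u)) yδ α J uex)
    (hbound : ‖ur‖ ≤ C) :
    J ur - J uex - ⟪q, A ur - A uex⟫
      ≤ (1 / (2 * α)) * (δ + ‖A‖ * ‖uex - P uex‖) ^ 2 + (α / 2) * ‖q‖ ^ 2
        + δ * ‖q‖ + C * ‖adjoint A q - adjoint P (adjoint A q)‖ := by
  have residual : ‖A (P uex) - yδ‖ ≤ δ + ‖A‖ * ‖uex - P uex‖ :=
    (norm_apply_sub_le_add_opNorm_mul A uex (P uex) yδ).trans (by gcongr)
  have projection : -⟪q, A ur - A (P ur)⟫ ≤ C * ‖adjoint A q - adjoint P (adjoint A q)‖ :=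
    (neg_inner_apply_sub_le_norm_mul_norm_adjoint_sub A P q ur).trans (by gcongr)
  calc J ur - J uex - ⟪q, A ur - A uex⟫
      ≤ (1 / (2 * α)) * ‖A (P uex) - yδ‖ ^ 2 + (α / 2) * ‖q‖ ^ 2 + ‖A uex - yδ‖ * ‖q‖
          + -⟪q, A ur - A (P ur)⟫ := bregman_distance_le_of_tikhonovFunctional_le hα hle q
    _ ≤ (1 / (2 * α)) * (δ + ‖A‖ * ‖uex - P uex‖) ^ 2 + (α / 2) * ‖q‖ ^ 2
          + δ * ‖q‖ + C * ‖adjoint A q - adjoint P (adjoint A q)‖ := by gcongr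

end Adjoint

/-- Let `U`, `Y` be real Hilbert spaces, `A : U → Y` a bounded linear operator with
adjoint `A*`, `P` the orthogonal projection onto a finite-dimensional subspace `Uₙ`
of `U`, and `J : U → ℝ`.  Let `α > 0`, `δ ≥ 0`, `C ≥ 0`, `q ∈ Y`, `uex, ur ∈ U` and
`yδ ∈ Y`.  Assume (i) `‖A uex − yδ‖ ≤ δ`; (ii) the source condition
`J u ≥ J uex + ⟪q, A u − A uex⟫` for all `u`; (iii) `ur` minimises the projected
Tikhonov functional `u ↦ ½‖A (P u) − yδ‖² + α J u`; (iv) `‖ur‖ ≤ C`.  Then the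
Bregman distance `D = J ur − J uex − ⟪q, A ur − A uex⟫` satisfies
`D ≤ (1/(2α)) (δ + ‖A‖ ‖uex − P uex‖)² + (α/2) ‖q‖² + δ‖q‖ + C ‖A*q − P (A*q)‖`. -/
theorem bregman_distance_estimate_projected_variational
    {U Y : Type*} [NormedAddCommGroup U] [InnerProductSpace ℝ U] [CompleteSpace U]
    [NormedAddCommGroup Y] [InnerProductSpace ℝ Y] [CompleteSpace Y]
    (A : U →L[ℝ] Y)
    (Un : Submodule ℝ U) (hUn : FiniteDimensional ℝ Un)
    (P : U →L[ℝ] U)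
    (hP : ∀ x : U, P x ∈ Un ∧ x - P x ∈ Unᗮ)
    (J : U → ℝ)
    (α δ C : ℝ) (hα : 0 < α) (hδ : 0 ≤ δ) (hC : 0 ≤ C)
    (q : Y) (uex ur : U) (yδ : Y)
    (hnoise : ‖A uex - yδ‖ ≤ δ)
    (hsource : ∀ u : U, J uex + ⟪q, A u - A uex⟫ ≤ J u)
    (hmin : ∀ u : U, (1 / 2) * ‖A (P ur) - yδ‖ ^ 2 + α * J ur
      ≤ (1 / 2) * ‖A (P u) - yδ‖ ^ 2 + α * J u)
    (hbound : ‖ur‖ ≤ C) :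
    J ur - J uex - ⟪q, A ur - A uex⟫
      ≤ (1 / (2 * α)) * (δ + ‖A‖ * ‖uex - P uex‖) ^ 2 + (α / 2) * ‖q‖ ^ 2
        + δ * ‖q‖ + C * ‖ContinuousLinearMap.adjoint A q - P (ContinuousLinearMap.adjoint A q)‖ := by
  obtain rfl : P = Un.starProjection := ContinuousLinearMap.ext fun x ↦
    (Submodule.eq_starProjection_of_mem_orthogonal (hP x).1 (hP x).2).symm
  simpa only [(isSelfAdjoint_starProjection Un).adjoint_eq] using
    bregman_distance_estimate_projected_variational_general A Un.starProjection J hα q hnoise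
      (hmin uex) hbound
end
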